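/- arXiv:1210.2557 — 14 statements merged into one kernel-verified Lean document; each statement's English description precedes it below -/
import Mathlib

section
/- Let E : ℕ → ℕ → ℕ be the recursively defined sequence (see context). Then for all d, n ∈ ℕ, E d n equals the number of multisets b of natural numbers with card b = n + 1 and ∑_{i ∈ b} 2^i = d + 1 (equivalently, the number of partitions (b₀ ≥ b₁ ≥ … ≥ b_n ≥ 0) with ∑_i 2^{b_i} = d + 1). -/
/-- For `p = 2`, the recursively defined dimensions `E d m = dim Ext^m(Δ(0), Δ(2d))`:
`E 0 0 = 1`, `E 0 m = 0` for `m ≥ 1`, and for `d ≥ 1`: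
`E d m = (if m ≥ 1 then E (d-1) (m-1) else 0) + (if d is odd then E ((d-1)/2) m else 0)`. -/
def E : ℕ → ℕ → ℕ
  | 0, 0 => 1
  | 0, _ + 1 => 0
  | d + 1, 0 => if Odd (d + 1) then E (d / 2) 0 else 0
  | d + 1, m + 1 => E d m + if Odd (d + 1) then E (d / 2) (m + 1) else 0
termination_by d m => d
decreasing_by all_goals omega

/-- The set of multisets of exponents with given size and given sum of powers of two. -/
def binSet (k s : ℕ) : Set (Multiset ℕ) :=
  {b : Multiset ℕ | Multiset.card b = k ∧ (b.map fun i => 2 ^ i).sum = s}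

lemma binSet_finite (k s : ℕ) : (binSet k s).Finite := by
  refine (Set.finite_Iic (k • Multiset.range (s + 1))).subset ?_
  rintro b ⟨hk, hs⟩
  rw [Set.mem_Iic, Multiset.le_iff_count]
  intro a
  by_cases ha : a ∈ b
  · have h1 : 2 ^ a ≤ s := by
      rw [← hs]
      exact Multiset.single_le_sum (fun _ _ => Nat.zero_le _) _
        (Multiset.mem_map_of_mem (fun i => 2 ^ i) ha)
    have h2 : a < 2 ^ a := Nat.lt_two_pow_self
    have h3 : 1 ≤ Multiset.count a (Multiset.range (s + 1)) :=
      Multiset.one_le_count_iff_mem.2 (Multiset.mem_range.2 (by omega))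
    have h4 := Multiset.count_le_card a b
    rw [Multiset.count_nsmul]
    nlinarith
  · rw [Multiset.count_eq_zero_of_notMem ha]
    exact Nat.zero_le _

lemma card_le_binSum (b : Multiset ℕ) : Multiset.card b ≤ (b.map fun i => 2 ^ i).sum := by
  induction b using Multiset.induction with
  | empty => simp
  | cons a b ih =>
    have : 1 ≤ 2 ^ a := Nat.one_le_two_pow
    simp only [Multiset.card_cons, Multiset.map_cons, Multiset.sum_cons]
    omega

lemma binSum_map_succ (b : Multiset ℕ) :
    ((b.map Nat.succ).map fun i => 2 ^ i).sum = 2 * (b.map fun i => 2 ^ i).sum := by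
  induction b using Multiset.induction with
  | empty => simp
  | cons a b ih =>
    simp only [Multiset.map_cons, Multiset.sum_cons, ih, Nat.succ_eq_add_one, pow_succ]
    ring

lemma exists_map_succ (b : Multiset ℕ) (h : 0 ∉ b) : ∃ c : Multiset ℕ, c.map Nat.succ = b := by
  refine ⟨b.map Nat.pred, ?_⟩
  rw [Multiset.map_map]
  conv_rhs => rw [← Multiset.map_id b]
  refine Multiset.map_congr rfl ?_
  intro x hx
  have : x ≠ 0 := fun h0 => h (h0 ▸ hx)
  simp only [Function.comp, id]
  exact Nat.succ_pred this

lemma binSet_succ (k s : ℕ) : binSet (k + 1) (s + 1) =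
    (fun b => (0 : ℕ) ::ₘ b) '' binSet k s ∪
      Multiset.map Nat.succ '' {b | b ∈ binSet (k + 1) ((s + 1) / 2) ∧ Even (s + 1)} := by
  ext b
  constructor
  · rintro ⟨hk, hs⟩
    by_cases h0 : 0 ∈ b
    · left
      obtain ⟨c, rfl⟩ := Multiset.exists_cons_of_mem h0
      refine ⟨c, ⟨?_, ?_⟩, rfl⟩
      · simpa using hk
      · simp only [Multiset.map_cons, Multiset.sum_cons, pow_zero] at hs
        omega
    · right
      obtain ⟨c, rfl⟩ := exists_map_succ b h0
      rw [binSum_map_succ] at hs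
      refine ⟨c, ⟨⟨by simpa using hk, by omega⟩, ?_⟩, rfl⟩
      rw [← hs]
      exact even_two_mul _
  · rintro (⟨c, ⟨hk, hs⟩, rfl⟩ | ⟨c, ⟨⟨hk, hs⟩, he⟩, rfl⟩)
    · refine ⟨by simpa using hk, ?_⟩
      simp only [Multiset.map_cons, Multiset.sum_cons, pow_zero]
      omega
    · refine ⟨by simpa using hk, ?_⟩
      rw [binSum_map_succ, hs]
      exact Nat.two_mul_div_two_of_even he

lemma ncard_binSet_succ (k s : ℕ) : (binSet (k + 1) (s + 1)).ncard =
    (binSet k s).ncard + if Even (s + 1) then (binSet (k + 1) ((s + 1) / 2)).ncard else 0 := by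
  rw [binSet_succ, Set.ncard_union_eq ?_ ((binSet_finite _ _).image _)
    (((binSet_finite _ _).subset (fun _ h => h.1)).image _)]
  · rw [Set.ncard_image_of_injective _ (fun _ _ h => (Multiset.cons_inj_right 0).1 h),
      Set.ncard_image_of_injective _ (Multiset.map_injective Nat.succ_injective)]
    split_ifs with h <;> simp [h]
  · rw [Set.disjoint_left]
    rintro _ ⟨c, -, rfl⟩ ⟨e, -, he⟩
    have : 0 ∈ Multiset.map Nat.succ e := by
      rw [he]
      exact Multiset.mem_cons_self 0 c
    simp at this

lemma binSet_eq_empty (k s : ℕ) (h : s < k) : binSet k s = ∅ := by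
  ext b
  simp only [Set.mem_empty_iff_false, iff_false]
  rintro ⟨hk, hs⟩
  have := card_le_binSum b
  omega

lemma binSet_zero_zero : binSet 0 0 = {0} := by
  ext b
  constructor
  · rintro ⟨hk, -⟩
    simpa using hk
  · rintro rfl
    exact ⟨rfl, rfl⟩

lemma binSet_zero_succ (s : ℕ) : binSet 0 (s + 1) = ∅ := by
  ext b
  simp only [Set.mem_empty_iff_false, iff_false]
  rintro ⟨hk, hs⟩
  rw [Multiset.card_eq_zero] at hk
  subst hk
  simp at hs

lemma E_eq_binSet (d : ℕ) : ∀ n, E d n = (binSet (n + 1) (d + 1)).ncard := by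
  induction d using Nat.strong_induction_on with
  | _ d ih =>
    intro n
    match d, n with
    | 0, 0 => rw [ncard_binSet_succ, binSet_zero_zero]; simp [E]
    | 0, m + 1 => rw [binSet_eq_empty _ _ (by omega)]; simp [E]
    | d + 1, n =>
      have hp : Odd (d + 1) ↔ Even (d + 1 + 1) := by
        rw [Nat.even_add_one, Nat.not_even_iff_odd]
      have hd : (d + 1 + 1) / 2 = d / 2 + 1 := by omega
      rw [ncard_binSet_succ, hd, ← ih (d / 2) (by omega)]
      cases n with
      | zero => rw [binSet_zero_succ, E]; simp only [hp, Set.ncard_empty, zero_add]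
      | succ m => rw [← ih d (by omega), E]; simp only [hp]

/-- `E d n` equals the number of multisets `b` of natural numbers with `card b = n + 1`
and `∑_{i ∈ b} 2^i = d + 1`. -/
theorem E_eq_card_multisets (d n : ℕ) :
    E d n =
      {b : Multiset ℕ | Multiset.card b = n + 1 ∧ (b.map fun i => 2 ^ i).sum = d + 1}.ncard := by
  exact E_eq_binSet d n
end

section
/- Let E : ℕ → ℕ → ℕ be the recursively defined sequence (see context). Then for all n ≥ 1 and all d ∈ ℕ, E d n = ∑_{k ∈ ℕ} (if 2^k divides d + 1 and (d+1)/2^k ≥ 2 then E ((d+1)/2^k − 2) (n−1) else 0); the sum is finite since 2^k ≤ d + 1 for each nonzero term. -/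
theorem E_aux (m : ℕ) : ∀ d N : ℕ, d < N → E d (m + 1) =
    ∑ k ∈ Finset.range N,
      if 2 ^ k ∣ d + 1 ∧ 2 ≤ (d + 1) / 2 ^ k then E ((d + 1) / 2 ^ k - 2) m else 0 := by
  intro d
  induction d using Nat.strong_induction_on with
  | _ d ih =>
    intro N hN
    obtain ⟨N, rfl⟩ : ∃ M, N = M + 1 := ⟨N - 1, by omega⟩
    rw [Finset.sum_range_succ']
    rcases d with _ | e
    · rw [E]
      symm
      rw [Finset.sum_eq_zero]
      · simp
      · intro k _
        rw [if_neg]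
        rintro ⟨_, h⟩
        have := Nat.div_le_self (0 + 1) (2 ^ (k + 1))
        omega
    · rw [E, add_comm]
      congr 1
      · by_cases ho : Odd (e + 1)
        · rw [if_pos ho, ih (e / 2) (by omega) N (by omega)]
          have he : e + 1 + 1 = 2 * (e / 2 + 1) := by
            obtain ⟨r, hr⟩ := ho
            omega
          apply Finset.sum_congr rfl
          intro k _
          rw [he, pow_succ', Nat.mul_div_mul_left _ _ (by norm_num)]
          simp only [Nat.mul_dvd_mul_iff_left (show 0 < 2 by norm_num)]
        · rw [if_neg ho]
          symm
          apply Finset.sum_eq_zero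
          intro k _
          rw [if_neg]
          rintro ⟨⟨c, hc⟩, _⟩
          apply ho
          rw [pow_succ', mul_assoc] at hc
          exact Nat.odd_iff.mpr (by omega)
      · simp

open Classical in
/-- The coefficient form of `s·gₙ(s) = ∑_{k ≥ 0} s^{2^k}·(s^{2^k} g_{n−1}(s^{2^k}))`:
for `n ≥ 1` and all `d`,
`E d n = ∑_{k ∈ ℕ} (if 2^k ∣ d+1 and (d+1)/2^k ≥ 2 then E ((d+1)/2^k − 2) (n−1) else 0)`;
the sum over all `k ∈ ℕ` has finite support. -/
theorem E_recursion (n : ℕ) (hn : 1 ≤ n) (d : ℕ) :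
    E d n =
      ∑ᶠ k : ℕ,
        if 2 ^ k ∣ d + 1 ∧ 2 ≤ (d + 1) / 2 ^ k then E ((d + 1) / 2 ^ k - 2) (n - 1) else 0 := by
  obtain ⟨m, rfl⟩ : ∃ m, n = m + 1 := ⟨n - 1, by omega⟩
  rw [E_aux m d (d + 1) (by omega), finsum_eq_sum_of_support_subset (s := Finset.range (d + 1))]
  · simp
  · intro k hk
    rw [Function.mem_support] at hk
    have h := (ite_ne_right_iff.mp hk).1
    have h1 := Nat.le_of_dvd (by omega) h.1
    have h2 := Nat.lt_two_pow_self (n := k)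
    simp only [Finset.coe_range, Set.mem_Iio]
    omega
end

section
/- Let p be an odd prime and e : ℕ → ℕ → ℕ the recursively defined sequence (see context). Then for every d ∈ ℕ, e d 1 equals (the number of k ∈ ℕ with d + 1 = p^{k+1}) plus (the number of pairs (k₁, k₀) ∈ ℕ × ℕ with d + 1 = p^{k₁} + p^{k₁ + k₀ + 1}). -/
/-- For an odd prime `p`, the recursively defined dimensions
`e p d m = dim Ext^m(Δ(0), Δ(2d))` over `SL₂` in characteristic `p`:
`e 0 0 = 1`, `e 0 m = 0` for `m ≥ 1`; `e d m = 0` if `d > 0` is not of the form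
`kp` or `kp − 1` with `k ≥ 1`; and for `k ≥ 1`:
`e (kp) m = (if m ≥ 1 then e (kp−1) (m−1) else 0)` and
`e (kp−1) m = (if m ≥ 1 then e ((k−1)p) (m−1) else 0) + e (k−1) m`. -/
def e (p : ℕ) : ℕ → ℕ → ℕ
  | 0, 0 => 1
  | 0, _ + 1 => 0
  | d + 1, m =>
    if h1 : (d + 1) % p = 0 then
      match m with
      | 0 => 0
      | m' + 1 => e p d m'
    else if h2 : (d + 2) % p = 0 then
      (match m with
       | 0 => 0
       | m' + 1 => e p (d + 2 - p) m') + e p ((d + 2) / p - 1) m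
    else 0
termination_by d m => d
decreasing_by
  · omega
  · have hp : 2 ≤ p := by
      by_contra hlt
      push_neg at hlt
      interval_cases p
      · simp at h2
      · omega
    omega
  · have hp : 2 ≤ p := by
      by_contra hlt
      push_neg at hlt
      interval_cases p
      · simp at h2
      · omega
    have h3 : (d + 2) / p ≤ (d + 2) / 2 := Nat.div_le_div_left hp (by omega)
    omega

/-- `e d 0` is the indicator of `d + 1` being a power of `p`. -/
theorem e_zero_eq (p : ℕ) (hp : p.Prime) (d : ℕ) :
    e p d 0 = {k : ℕ | d + 1 = p ^ k}.ncard := by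
  have h2 := hp.two_le
  induction d using Nat.strong_induction_on with
  | _ d ih =>
    rcases d with _ | d
    · have : {k : ℕ | 0 + 1 = p ^ k} = {0} := by
        ext k
        simp only [Set.mem_ofPred_eq, Set.mem_singleton_iff]
        constructor
        · intro h
          by_contra hk
          have := Nat.one_lt_pow hk hp.one_lt
          omega
        · rintro rfl; simp
      rw [this]
      simp [e]
    · by_cases hq : p ∣ d + 1 + 1
      · obtain ⟨q, hq⟩ := hq
        have hq0 : 0 < q := by
          rcases Nat.eq_zero_or_pos q with rfl | h
          · simp at hq
          · exact h
        have h1 : ¬ (d + 1) % p = 0 := by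
          intro h
          have h3 : p ∣ d + 1 := Nat.dvd_of_mod_eq_zero h
          have h4 : p ∣ d + 1 + 1 := ⟨q, hq⟩
          have := (Nat.dvd_add_right h3).1 h4
          exact hp.one_lt.ne' (Nat.dvd_one.1 this)
        have h3 : (d + 2) % p = 0 := Nat.mod_eq_zero_of_dvd ⟨q, hq⟩
        have h4 : (d + 2) / p = q := by
          rw [show d + 2 = p * q from hq]
          exact Nat.mul_div_cancel_left _ hp.pos
        have hlt : q - 1 < d + 1 := by nlinarith [Nat.sub_add_cancel hq0]
        rw [e, dif_neg h1, dif_pos h3, h4, ih _ hlt]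
        simp only [zero_add]
        rw [← Set.ncard_image_of_injective _ Nat.succ_injective]
        congr 1
        ext k
        simp only [Set.mem_ofPred_eq, Set.mem_image, hq, Nat.sub_add_cancel hq0]
        constructor
        · rintro ⟨j, rfl, rfl⟩
          rw [Nat.succ_eq_add_one, pow_succ, mul_comm]
        · intro h
          rcases k with _ | k
          · exfalso
            simp at h
            omega
          · refine ⟨k, ?_, rfl⟩
            rw [pow_succ, mul_comm] at h
            exact Nat.eq_of_mul_eq_mul_right hp.pos h
      · have : {k : ℕ | d + 1 + 1 = p ^ k} = ∅ := by
          ext k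
          simp only [Set.mem_ofPred_eq, Set.mem_empty_iff_false, iff_false]
          intro h
          rcases k with _ | k
          · simp at h
          · exact hq (h ▸ Dvd.intro_left _ (pow_succ p k).symm)
        rw [this, e]
        have h3 : ¬ (d + 2) % p = 0 := fun h => hq (Nat.dvd_of_mod_eq_zero h)
        simp [h3]

/-- The coefficient form of
`s·h₁(s) = ∑_{k₁ ≥ 0} s^{p^{k₁+1}} + ∑_{k₁,k₀ ≥ 0} s^{p^{k₁} + p^{k₁+k₀+1}}`:
for every `d`, `e d 1` equals the number of `k` with `d + 1 = p^{k+1}` plus the number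
of pairs `(k₁, k₀)` with `d + 1 = p^{k₁} + p^{k₁+k₀+1}`. -/
theorem e_one_eq (p : ℕ) (hp : p.Prime) (hodd : Odd p) (d : ℕ) :
    e p d 1 =
      {k : ℕ | d + 1 = p ^ (k + 1)}.ncard +
        {kk : ℕ × ℕ | d + 1 = p ^ kk.1 + p ^ (kk.1 + kk.2 + 1)}.ncard := by
  have h2 := hp.two_le
  induction d using Nat.strong_induction_on with
  | _ d ih =>
    rcases d with _ | d
    · have hA : {k : ℕ | 0 + 1 = p ^ (k + 1)} = ∅ := by
        ext k
        simp only [Set.mem_ofPred_eq, Set.mem_empty_iff_false, iff_false]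
        have := Nat.one_lt_pow (Nat.succ_ne_zero k) hp.one_lt
        rw [Nat.succ_eq_add_one] at this
        omega
      have hB : {kk : ℕ × ℕ | 0 + 1 = p ^ kk.1 + p ^ (kk.1 + kk.2 + 1)} = ∅ := by
        ext k
        simp only [Set.mem_ofPred_eq, Set.mem_empty_iff_false, iff_false]
        have h3 : 0 < p ^ k.1 := pow_pos hp.pos _
        have h4 : 0 < p ^ (k.1 + k.2 + 1) := pow_pos hp.pos _
        omega
      rw [hA, hB]
      simp [e]
    · by_cases hq : p ∣ d + 1 + 1
      · obtain ⟨q, hq⟩ := hq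
        have hq0 : 0 < q := by
          rcases Nat.eq_zero_or_pos q with rfl | h
          · simp at hq
          · exact h
        have h1 : ¬ (d + 1) % p = 0 := by
          intro h
          have h3 : p ∣ d + 1 := Nat.dvd_of_mod_eq_zero h
          have h4 : p ∣ d + 1 + 1 := ⟨q, hq⟩
          have := (Nat.dvd_add_right h3).1 h4
          exact hp.one_lt.ne' (Nat.dvd_one.1 this)
        have h3 : (d + 2) % p = 0 := Nat.mod_eq_zero_of_dvd ⟨q, hq⟩
        have h4 : (d + 2) / p = q := by
          rw [show d + 2 = p * q from hq]
          exact Nat.mul_div_cancel_left _ hp.pos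
        have hlt : q - 1 < d + 1 := by nlinarith [Nat.sub_add_cancel hq0]
        have hB : {kk : ℕ × ℕ | d + 1 + 1 = p ^ kk.1 + p ^ (kk.1 + kk.2 + 1)}.ncard =
            {kk : ℕ × ℕ | q = p ^ kk.1 + p ^ (kk.1 + kk.2 + 1)}.ncard := by
          have hinj : Function.Injective (fun x : ℕ × ℕ => (x.1 + 1, x.2)) := by
            rintro ⟨a, b⟩ ⟨c, f⟩ h
            simpa using h
          symm
          rw [← Set.ncard_image_of_injective _ hinj]
          symm
          congr 1
          ext ⟨a, b⟩
          simp only [Set.mem_ofPred_eq, Set.mem_image, hq]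
          constructor
          · intro h
            rcases a with _ | a
            · exfalso
              have h5 : p ∣ p ^ (0 + b + 1) := dvd_pow_self p (Nat.succ_ne_zero _)
              have h6 : p ∣ p ^ 0 + p ^ (0 + b + 1) := h ▸ Dvd.intro q rfl
              have h7 := (Nat.dvd_add_left h5).1 h6
              rw [pow_zero] at h7
              exact hp.one_lt.ne' (Nat.dvd_one.1 h7)
            · refine ⟨(a, b), ?_, rfl⟩
              apply Nat.eq_of_mul_eq_mul_left hp.pos
              rw [h]
              ring
          · rintro ⟨⟨a', b'⟩, h, h'⟩
            simp only [Prod.mk.injEq] at h'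
            obtain ⟨rfl, rfl⟩ := h'
            rw [h]
            ring
        have hA : {k : ℕ | d + 1 + 1 = p ^ (k + 1)} = {k : ℕ | q = p ^ k} := by
          ext k
          simp only [Set.mem_ofPred_eq, hq]
          rw [pow_succ, mul_comm]
          exact ⟨fun h => Nat.eq_of_mul_eq_mul_right hp.pos h, fun h => by rw [h]⟩
        rw [e, dif_neg h1, dif_pos h3, h4, ih _ hlt, hB, hA, Nat.sub_add_cancel hq0,
          ← add_assoc]
        congr 1
        rw [e_zero_eq p hp]
        obtain ⟨r, rfl⟩ : ∃ r, q = r + 1 := ⟨q - 1, by omega⟩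
        have h5 : d + 2 - p = p * r := by
          have : d + 2 = p * r + p := by rw [show d + 2 = _ from hq]; ring
          omega
        rw [h5]
        rcases Nat.eq_zero_or_pos r with rfl | hr
        · have hA0 : {k : ℕ | 0 + 1 = p ^ (k + 1)} = ∅ := by
            ext k
            simp only [Set.mem_ofPred_eq, Set.mem_empty_iff_false, iff_false]
            have := Nat.one_lt_pow (Nat.succ_ne_zero k) hp.one_lt
            rw [Nat.succ_eq_add_one] at this
            omega
          rw [hA0]
          simp
        · have hE : {k : ℕ | p * r + 1 = p ^ k} = ∅ := by
            ext k
            simp only [Set.mem_ofPred_eq, Set.mem_empty_iff_false, iff_false]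
            intro h
            rcases k with _ | k
            · have := Nat.mul_pos hp.pos hr
              rw [pow_zero] at h
              omega
            · have h6 : p ∣ p * r + 1 := h ▸ dvd_pow_self p (Nat.succ_ne_zero _)
              have h7 := (Nat.dvd_add_right (Dvd.intro r rfl)).1 h6
              exact hp.one_lt.ne' (Nat.dvd_one.1 h7)
          rw [hE, Set.ncard_empty, zero_add,
            ← Set.ncard_image_of_injective _ Nat.succ_injective]
          congr 1
          ext k
          simp only [Set.mem_ofPred_eq, Set.mem_image]
          constructor
          · rintro ⟨j, h, rfl⟩
            exact h
          · intro h
            rcases k with _ | k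
            · rw [pow_zero] at h
              omega
            · exact ⟨k, h, rfl⟩
      · have h3 : ¬ (d + 2) % p = 0 := fun h => hq (Nat.dvd_of_mod_eq_zero h)
        have hA : {k : ℕ | d + 1 + 1 = p ^ (k + 1)} = ∅ := by
          ext k
          simp only [Set.mem_ofPred_eq, Set.mem_empty_iff_false, iff_false]
          intro h
          exact hq (h ▸ dvd_pow_self p (Nat.succ_ne_zero _))
        have key : ∀ a b : ℕ, d + 1 + 1 = p ^ a + p ^ (a + b + 1) →
            a = 0 ∧ d + 1 = p ^ (b + 1) := by
          intro a b h
          rcases a with _ | a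
          · refine ⟨rfl, ?_⟩
            rw [pow_zero, zero_add] at h
            omega
          · exact absurd (h ▸ dvd_add (dvd_pow_self p (Nat.succ_ne_zero _))
              (dvd_pow_self p (Nat.succ_ne_zero _))) hq
        rw [hA, Set.ncard_empty, zero_add, e]
        by_cases h1 : (d + 1) % p = 0
        · rw [dif_pos h1]
          rw [e_zero_eq p hp]
          have hinj : Function.Injective (fun x : ℕ => (0, x) : ℕ → ℕ × ℕ) := by
            intro a b h
            simpa using h
          have hS : {k : ℕ | d + 1 = p ^ k} = Nat.succ '' {k : ℕ | d + 1 = p ^ (k + 1)} := by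
            ext k
            simp only [Set.mem_ofPred_eq, Set.mem_image]
            constructor
            · intro h
              rcases k with _ | k
              · rw [h, pow_zero, Nat.mod_eq_of_lt hp.one_lt] at h1
                omega
              · exact ⟨k, h, rfl⟩
            · rintro ⟨j, h, rfl⟩
              exact h
          rw [hS, Set.ncard_image_of_injective _ Nat.succ_injective,
            ← Set.ncard_image_of_injective _ hinj]
          congr 1
          ext ⟨a, b⟩
          simp only [Set.mem_ofPred_eq, Set.mem_image, Prod.mk.injEq]
          constructor
          · rintro ⟨x, h, rfl, rfl⟩
            rw [pow_zero, zero_add, h, add_comm]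
          · intro h
            obtain ⟨rfl, h'⟩ := key a b h
            exact ⟨b, h', rfl, rfl⟩
        · rw [dif_neg h1, dif_neg h3]
          have hB : {kk : ℕ × ℕ | d + 1 + 1 = p ^ kk.1 + p ^ (kk.1 + kk.2 + 1)} = ∅ := by
            ext ⟨a, b⟩
            simp only [Set.mem_ofPred_eq, Set.mem_empty_iff_false, iff_false]
            intro h
            obtain ⟨_, h'⟩ := key a b h
            exact h1 (Nat.mod_eq_zero_of_dvd (h' ▸ dvd_pow_self p (Nat.succ_ne_zero _)))
          rw [hB, Set.ncard_empty]
end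

section
/- Let L : ℕ → Finset ℕ be the recursively defined family of finite sets (see context). Then for every t ≥ 1: L (2t − 1) = {t, t+1, …, 2t} (the integer interval [t, 2t]) and L (2t) = {t+1, t+2, …, 2t+1} (the integer interval [t+1, 2t+1]). -/
/-- The sets of lengths of labels: `L 0 = {1}`, `L 1 = {1, 2}`, and
`L (n+2) = {x + 1 : x ∈ L (n+1) ∪ L n}`. -/
def L : ℕ → Finset ℕ
  | 0 => {1}
  | 1 => {1, 2}
  | n + 2 => (L (n + 1) ∪ L n).image (· + 1)

theorem L_eq_aux (n : ℕ) : L n = Finset.Icc (n / 2 + 1) (n + 1) := by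
  induction n using Nat.strong_induction_on with
  | _ n ih =>
    match n, ih with
    | 0, _ => ext x; simp [L]
    | 1, _ => ext x; simp [L]; omega
    | n + 2, ih =>
      ext x
      rw [L, ih (n + 1) (by omega), ih n (by omega)]
      simp only [Finset.mem_image, Finset.mem_union, Finset.mem_Icc]
      constructor
      · rintro ⟨y, hy, rfl⟩
        omega
      · intro hx
        exact ⟨x - 1, by omega, by omega⟩

/-- For every `t ≥ 1`, `L (2t − 1) = {t, t+1, …, 2t}` and `L (2t) = {t+1, …, 2t+1}`. -/
theorem L_eq_Icc (t : ℕ) (ht : 1 ≤ t) :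
    L (2 * t - 1) = Finset.Icc t (2 * t) ∧ L (2 * t) = Finset.Icc (t + 1) (2 * t + 1) := by
  rw [L_eq_aux, L_eq_aux]
  constructor
  · congr 1 <;> omega
  · congr 1
    omega
end

section
/- Let N : ℕ → ℕ → ℕ be the recursively defined double sequence (see context). Then for all n ∈ ℕ and all l with l ≤ n + 1, N n l = binomial(l, n + 1 − l); moreover N n l = 0 whenever l > n + 1. In particular there is exactly one label of length n + 1, and the number of labels of length n − i is binomial(n − i, i + 1). -/
/-- The number `N n l` of labels of length `l` in the expression for `s·hₙ(s)`:
`N 0 l = 1` iff `l = 1`; `N 1 l = 1` iff `l ∈ {1, 2}`; `N (n+2) 0 = 0` and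
`N (n+2) (l+1) = N (n+1) l + N n l`. -/
def Nlab : ℕ → ℕ → ℕ
  | 0, l => if l = 1 then 1 else 0
  | 1, l => if l = 1 ∨ l = 2 then 1 else 0
  | n + 2, 0 => 0
  | n + 2, l + 1 => Nlab (n + 1) l + Nlab n l

/-- For all `n` and `l ≤ n + 1`, `N n l = C(l, n + 1 − l)`, and `N n l = 0` for
`l > n + 1`.  In particular there is exactly one label of length `n + 1`, and the
number of labels of length `n − i` is `C(n − i, i + 1)`. -/
theorem Nlab_eq_choose (n l : ℕ) :
    (l ≤ n + 1 → Nlab n l = Nat.choose l (n + 1 - l)) ∧ (n + 1 < l → Nlab n l = 0) := by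
  induction n using Nat.twoStepInduction generalizing l with
  | zero =>
    refine ⟨fun h => ?_, fun h => ?_⟩
    · interval_cases l <;> simp [Nlab]
    · rw [Nlab, if_neg (by omega)]
  | one =>
    refine ⟨fun h => ?_, fun h => ?_⟩
    · interval_cases l <;> simp [Nlab]
    · rw [Nlab, if_neg (by omega)]
  | more n ih0 ih1 =>
    cases l with
    | zero => simp [Nlab]
    | succ l =>
      rw [Nlab]
      refine ⟨fun h => ?_, fun h => ?_⟩
      · rw [(ih1 l).1 (by omega)]
        by_cases hl : l ≤ n + 1
        · rw [(ih0 l).1 hl]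
          have e1 : n + 1 + 1 - l = (n + 1 - l) + 1 := by omega
          have e2 : n + 2 + 1 - (l + 1) = (n + 1 - l) + 1 := by omega
          rw [e1, e2, Nat.choose_succ_succ, Nat.add_comm]
        · have e : l = n + 2 := by omega
          subst e
          rw [(ih0 (n + 2)).2 (by omega)]
          simp
      · rw [(ih1 l).2 (by omega), (ih0 l).2 (by omega)]
end

section
/- Let n, a be natural numbers. (i) If (a : ℝ) < (1/2 − √5/10)·n − 1, then binomial(n − a + 1, a) ≤ binomial(n − a, a + 1). (ii) If (1/2 − √5/10)·n < (a : ℝ) and 2a ≤ n, then binomial(n − a, a + 1) ≤ binomial(n − a + 1, a). -/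
theorem choose_cross_aux (a d : ℕ) :
    Nat.choose (a + d) (a + 1) * ((a + 1) * (a + d + 1)) =
      Nat.choose (a + d + 1) a * ((d + 1) * d) := by
  have h1 := Nat.choose_succ_right_eq (a + d) a
  have h2 := Nat.choose_mul_succ_eq (a + d) a
  rw [show a + d - a = d by omega] at h1
  rw [show a + d + 1 - a = d + 1 by omega] at h2
  calc _ = (Nat.choose (a + d) (a + 1) * (a + 1)) * (a + d + 1) := by ring
    _ = (Nat.choose (a + d) a * (a + d + 1)) * d := by rw [h1]; ring
    _ = _ := by rw [h2]; ring

/-- Comparison of consecutive binomial coefficients along an anti-diagonal: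
(i) if `a < (1/2 − √5/10)·n − 1` then `C(n−a+1, a) ≤ C(n−a, a+1)`;
(ii) if `(1/2 − √5/10)·n < a` and `2a ≤ n` then `C(n−a, a+1) ≤ C(n−a+1, a)`. -/
theorem choose_antidiagonal_comparison (n a : ℕ) :
    ((a : ℝ) < (1 / 2 - Real.sqrt 5 / 10) * n - 1 →
      Nat.choose (n - a + 1) a ≤ Nat.choose (n - a) (a + 1)) ∧
    ((1 / 2 - Real.sqrt 5 / 10) * n < (a : ℝ) ∧ 2 * a ≤ n →
      Nat.choose (n - a) (a + 1) ≤ Nat.choose (n - a + 1) a) := by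
  have hs : Real.sqrt 5 * Real.sqrt 5 = 5 := Real.mul_self_sqrt (by norm_num)
  have hs0 : 0 ≤ Real.sqrt 5 := Real.sqrt_nonneg 5
  have hs2 : 2 < Real.sqrt 5 := by nlinarith
  have hs3 : Real.sqrt 5 < 3 := by nlinarith
  generalize Real.sqrt 5 = s at *
  have hn : (0 : ℝ) ≤ n := Nat.cast_nonneg n
  have ha : (0 : ℝ) ≤ a := Nat.cast_nonneg a
  -- factorisation of the quadratic form
  have key : ∀ x : ℝ, (n : ℝ) ^ 2 - 5 * n * x + 5 * x ^ 2 =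
      5 * (((1 / 2 - s / 10) * n - x) * ((1 / 2 + s / 10) * n - x)) := by
    intro x
    linear_combination (n : ℝ) ^ 2 / 20 * hs
  have hsn : 2 * (n : ℝ) ≤ s * n := by nlinarith
  constructor
  · intro h
    have h3 : (a : ℝ) + 1 ≤ 3 / 10 * n := by nlinarith
    have hle : 2 * a ≤ n := by
      have : (2 : ℝ) * a ≤ n := by linarith
      exact_mod_cast this
    obtain ⟨d, rfl⟩ := Nat.exists_eq_add_of_le hle
    rw [show 2 * a + d - a = a + d by omega]
    have hk := key (a + 1)
    have hp := mul_pos (a := (1 / 2 - s / 10) * ((2 * a + d : ℕ) : ℝ) - (a + 1))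
      (b := (1 / 2 + s / 10) * ((2 * a + d : ℕ) : ℝ) - (a + 1)) (by linarith) (by linarith)
    have hr : ((a : ℝ) + 1) * (a + d + 1) ≤ (d + 1) * d := by
      push_cast at *
      nlinarith
    have hN : (a + 1) * (a + d + 1) ≤ (d + 1) * d := by exact_mod_cast hr
    have hc := choose_cross_aux a d
    refine Nat.le_of_mul_le_mul_right (c := (a + 1) * (a + d + 1)) ?_ (by positivity)
    rw [hc]
    exact Nat.mul_le_mul_left _ hN
  · rintro ⟨h, hle⟩
    obtain ⟨d, rfl⟩ := Nat.exists_eq_add_of_le hle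
    rw [show 2 * a + d - a = a + d by omega]
    have hk := key a
    have hle' : (2 : ℝ) * a ≤ ((2 * a + d : ℕ) : ℝ) := by exact_mod_cast hle
    have hp := mul_nonneg (a := a - (1 / 2 - s / 10) * ((2 * a + d : ℕ) : ℝ))
      (b := (1 / 2 + s / 10) * ((2 * a + d : ℕ) : ℝ) - a) (by linarith) (by linarith)
    have hr : ((d : ℝ) + 1) * d ≤ (a + 1) * (a + d + 1) := by
      push_cast at *
      nlinarith
    have hN : (d + 1) * d ≤ (a + 1) * (a + d + 1) := by exact_mod_cast hr
    have hc := choose_cross_aux a d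
    refine Nat.le_of_mul_le_mul_right (c := (a + 1) * (a + d + 1)) ?_ (by positivity)
    rw [hc]
    exact Nat.mul_le_mul_left _ hN
end

section
/- Let p be an odd prime, e : ℕ → ℕ → ℕ the recursively defined dimension sequence, and N : ℕ → ℕ → ℕ the recursively defined label-count sequence (see context). Then for every n ∈ ℕ and every l ∈ ℕ there exists d ∈ ℕ with e d n ≥ N n l. -/
theorem e_mul (p : ℕ) (hp : 3 ≤ p) (k : ℕ) (hk : 1 ≤ k) (m : ℕ) :
    e p (k * p) (m + 1) = e p (k * p - 1) m := by
  obtain ⟨c, hc⟩ : ∃ c, k * p = c + 1 := ⟨k * p - 1, by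
    have : 1 * 3 ≤ k * p := Nat.mul_le_mul hk hp
    omega⟩
  have h : (c + 1) % p = 0 := by rw [← hc]; simp
  rw [hc, e]
  simp [h]

theorem e_pred (p : ℕ) (hp : 3 ≤ p) (k : ℕ) (hk : 1 ≤ k) (m : ℕ) :
    e p (k * p - 1) m =
      (match m with
       | 0 => 0
       | m' + 1 => e p ((k - 1) * p) m') + e p (k - 1) m := by
  have h3 : 1 * 3 ≤ k * p := Nat.mul_le_mul hk hp
  obtain ⟨c, hc⟩ : ∃ c, k * p = c + 2 := ⟨k * p - 2, by omega⟩
  have h2 : (c + 2) % p = 0 := by rw [← hc]; simp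
  have h1 : ¬ (c + 1) % p = 0 := by
    intro h
    have hd1 := Nat.dvd_of_mod_eq_zero h
    have hd2 := Nat.dvd_of_mod_eq_zero h2
    have := (Nat.dvd_add_right hd1).1 (show p ∣ (c + 1) + 1 from hd2)
    have := Nat.le_of_dvd one_pos this
    omega
  have hq : (c + 2) / p = k := by rw [← hc]; exact Nat.mul_div_cancel _ (by omega)
  have hs : c + 2 - p = (k - 1) * p := by rw [← hc, Nat.sub_mul, one_mul]
  have hc' : k * p - 1 = c + 1 := by omega
  rw [hc']
  cases m with
  | zero => rw [e.eq_def]; simp [h1, h2, hq]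
  | succ m => rw [e.eq_def]; simp [h1, h2, hq, hs]

/-- The weights used: `kk p l = 1 + p + ⋯ + p ^ l`. -/
def kk (p : ℕ) : ℕ → ℕ
  | 0 => 1
  | l + 1 => kk p l * p + 1

theorem kk_pos (p l : ℕ) : 1 ≤ kk p l := by
  cases l <;> simp [kk]

theorem e_step_one (p : ℕ) (hp : 3 ≤ p) (k : ℕ) (hk : 1 ≤ k) (m : ℕ) :
    e p (k * p - 1) m ≤ e p ((k * p + 1) * p - 1) (m + 1) := by
  rw [e_pred p hp (k * p + 1) (by omega)]
  simp only [Nat.add_sub_cancel]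
  rw [e_mul p hp k hk]
  omega

theorem e_step (p : ℕ) (hp : 3 ≤ p) (k : ℕ) (hk : 1 ≤ k) (m : ℕ) :
    e p (k * p - 1) (m + 1) + e p (k * p - 1) m
      ≤ e p ((k * p + 1) * p - 1) (m + 2) := by
  have hkp : 1 ≤ k * p := Nat.mul_pos hk (by omega)
  rw [e_pred p hp (k * p + 1) (by omega)]
  simp only [Nat.add_sub_cancel]
  rw [e_mul p hp k hk, e_mul p hp (k * p) hkp, e_pred p hp (k * p) hkp m]
  omega

theorem Nlab_zero (n : ℕ) : Nlab n 0 = 0 := by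
  match n with
  | 0 => simp [Nlab]
  | 1 => simp [Nlab]
  | n + 2 => simp [Nlab]

theorem Nlab_le (p : ℕ) (hp : 3 ≤ p) (l : ℕ) :
    ∀ n, Nlab n (l + 1) ≤ e p (kk p l * p - 1) n := by
  induction l with
  | zero =>
    intro n
    have h := e_pred p hp 1 le_rfl n
    match n with
    | 0 => simp [kk, Nlab] at *; simp [h, e]
    | 1 => simp [kk, Nlab] at *; simp [h, e]
    | n + 2 => simp [Nlab, Nlab_zero]
  | succ l ih =>
    intro n
    match n with
    | 0 => simp [Nlab]
    | 1 =>
      refine le_trans ?_ ((ih 0).trans (e_step_one p hp _ (kk_pos p l) 0))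
      simp [Nlab]
    | n + 2 =>
      refine le_trans ?_ (e_step p hp _ (kk_pos p l) n)
      rw [Nlab]
      exact Nat.add_le_add (ih _) (ih _)

/-- For an odd prime `p`, every `n` and every length `l`, there is a weight `2d`
with `dim Ext^n(Δ(0), Δ(2d)) = e p d n` at least the number `N n l` of labels of
length `l`. -/
theorem exists_weight_dim_ge_label_count (p : ℕ) (hp : p.Prime) (hodd : Odd p)
    (n l : ℕ) : ∃ d : ℕ, Nlab n l ≤ e p d n := by
  have h3 : 3 ≤ p := by
    have := hp.two_le
    rcases hodd with ⟨c, hc⟩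
    omega
  cases l with
  | zero => exact ⟨0, by simp [Nlab_zero]⟩
  | succ l => exact ⟨_, Nlab_le p h3 l n⟩
end

section
/- Fix an integer m ≥ 4. Then the number of multisets b of natural numbers with card b = 2m − 2 and ∑_{i ∈ b} 2^i = 2^m is at most the number of multisets b of natural numbers with card b = 2m − 1 and ∑_{i ∈ b} 2^i = 2^m. -/
open Finset

/-- `cA k s n`: number of sequences `x₁, …, x_k` of naturals with `x₁ ≤ 2 s`,
`x_{i+1} ≤ 2 x_i` and total `n`. -/
def cA : ℕ → ℕ → ℤ → ℕ
  | 0, _, n => if n = 0 then 1 else 0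
  | k + 1, s, n => if n < 0 then 0 else ∑ x ∈ range (2 * s + 1), cA k x (n - x)

lemma cA_neg (k s : ℕ) (n : ℤ) (h : n < 0) : cA k s n = 0 := by
  cases k with
  | zero => simp [cA]; omega
  | succ k => simp [cA, h]

lemma cA_succ (k s : ℕ) (n : ℤ) :
    cA (k + 1) s n = ∑ x ∈ range (2 * s + 1), cA k x (n - x) := by
  by_cases h : n < 0
  · rw [cA_neg _ _ _ h]
    symm
    apply sum_eq_zero
    intro x _
    apply cA_neg
    omega
  · simp [cA, h]

lemma cA_zero (k : ℕ) (n : ℤ) : cA k 0 n = if n = 0 then 1 else 0 := by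
  induction k generalizing n with
  | zero => simp [cA]
  | succ k ih => rw [cA_succ]; simp [ih]

/-- The part of `cA (k+1) s` starting with a number at least three. -/
def cE (k s : ℕ) (n : ℤ) : ℕ := ∑ x ∈ Ico 3 (2 * s + 1), cA k x (n - x)

lemma cA_split (k s : ℕ) (hs : 1 ≤ s) (n : ℤ) :
    cA (k + 1) s n = cA (k + 1) 1 n + cE k s n := by
  rw [cA_succ, cA_succ, cE]
  exact (sum_range_add_sum_Ico _ (by omega)).symm

lemma cA_one (k : ℕ) (n : ℤ) (hn : n ≠ 0) :
    cA (k + 1) 1 n = cA k 1 (n - 1) + cA k 2 (n - 2) := by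
  rw [cA_succ]
  simp [sum_range_succ, cA_zero, hn]

lemma cE_two (k : ℕ) (n : ℤ) : cE k 2 n = cA k 3 (n - 3) + cA k 4 (n - 4) := by
  simp [cE, sum_Ico_eq_sum_range, sum_range_succ]

lemma cE_three (k : ℕ) (n : ℤ) : cE k 3 n =
    cA k 3 (n - 3) + cA k 4 (n - 4) + cA k 5 (n - 5) + cA k 6 (n - 6) := by
  simp [cE, sum_Ico_eq_sum_range, sum_range_succ]

lemma window (f : ℤ → ℕ) (κ : ℤ) (hf : ∀ a b, a ≤ b → a + b ≤ κ → f a ≤ f b) (L : ℕ) :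
    ∀ u v : ℤ, (L : ℤ) - 1 ≤ u - v → u + v ≤ κ →
      ∑ t ∈ range L, f (v + t) ≤ ∑ t ∈ range L, f (u - t) := by
  induction L with
  | zero => intros; simp
  | succ L ih =>
    intro u v h1 h2
    push_cast at h1
    by_cases h : u - v = L
    · rw [← sum_range_reflect]
      apply le_of_eq
      apply sum_congr rfl
      intro t ht
      have := mem_range.1 ht
      congr 1
      have : ((L + 1 - 1 - t : ℕ) : ℤ) = L - t := by omega
      rw [this]; omega
    · rw [sum_range_succ', sum_range_succ']
      have h3 := ih (u - 1) (v + 1) (by omega) (by omega)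
      have h4 := hf v u (by omega) (by omega)
      have e1 : ∀ t : ℕ, v + ((t + 1 : ℕ) : ℤ) = v + 1 + t := by intro t; push_cast; ring
      have e2 : ∀ t : ℕ, u - ((t + 1 : ℕ) : ℤ) = u - 1 - t := by intro t; push_cast; ring
      simp only [e1, e2]
      simp only [Nat.cast_zero, add_zero, sub_zero]
      omega

/-- The interval monotonicity property at level `k`. -/
def Mon (k : ℕ) : Prop :=
  ∀ s : ℕ, 1 ≤ s → ∀ a b : ℤ, a ≤ b → a + b ≤ 4 * k - 3 → cA k s a ≤ cA k s b

lemma monE (k : ℕ) (hk : Mon k) (s : ℕ) (a b : ℤ) (hab : a ≤ b) (h : a + b ≤ 4 * k + 3) :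
    cE k s a ≤ cE k s b := by
  apply sum_le_sum
  intro x hx
  have := mem_Ico.1 hx
  apply hk x (by omega) _ _ (by omega) (by omega)

lemma mon_succ (k : ℕ) (hk : Mon k)
    (h1 : ∀ a b : ℤ, a ≤ b → a + b ≤ 4 * k + 1 → cA (k + 1) 1 a ≤ cA (k + 1) 1 b) :
    Mon (k + 1) := by
  intro s hs a b hab h
  push_cast at h
  rw [cA_split k s hs, cA_split k s hs]
  have := h1 a b hab (by omega)
  have := monE k hk s a b hab (by omega)
  omega

lemma expand (K : ℕ) (n : ℤ) (hn : 7 ≤ n) : cA (K + 4) 1 n =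
    -- windows
    (cA (K+1) 1 (n-3) + cA (K+1) 1 (n-4) + cA (K+1) 1 (n-5) + cA (K+1) 1 (n-6)
      + cA (K+1) 1 (n-7) + cA (K+1) 1 (n-8) + cA (K+1) 1 (n-9))
    + 2 * (cA (K+1) 1 (n-4) + cA (K+1) 1 (n-5) + cA (K+1) 1 (n-6) + cA (K+1) 1 (n-7)
      + cA (K+1) 1 (n-8))
    + (cA K 3 (n-7) + cA K 3 (n-8) + cA K 3 (n-9))
    -- single terms
    + (cA K 4 (n-8) + cA K 3 (n-8) + 2 * cA K 4 (n-9) + cA K 4 (n-10))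
    + (cE K 3 (n-6) + cE K 4 (n-7) + cE K 3 (n-7) + cE K 4 (n-8))
    + (cE K 2 (n-7) + cE K 3 (n-8) + cE K 4 (n-9) + cA (K+1) 5 (n-10) + cA (K+1) 6 (n-11))
    + (cA (K+1) 1 (n-7) + cE K 2 (n-8) + cE (K+1) 4 (n-6)) := by
  have r1 := cA_one (K+3) n (by omega)
  have r2 := cA_one (K+2) (n-1) (by omega)
  have r3 := cA_split (K+2) 2 (by omega) (n-2)
  have r4 := cE_two (K+2) (n-2)
  have r5 := cA_one (K+2) (n-2) (by omega)
  have r6 := cA_one (K+1) (n-2) (by omega)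
  have r7 := cA_split K 2 (by omega) (n-4)
  have r8 := cE_two K (n-4)
  have r9 := cA_split (K+1) 2 (by omega) (n-3)
  have r10 := cE_two (K+1) (n-3)
  have r11 := cA_one (K+1) (n-3) (by omega)
  have r12 := cA_split K 2 (by omega) (n-5)
  have r13 := cE_two K (n-5)
  have r14 := cA_split (K+1) 2 (by omega) (n-4)
  have r15 := cE_two (K+1) (n-4)
  have r16 := cA_one (K+1) (n-4) (by omega)
  have r17 := cA_split K 2 (by omega) (n-6)
  have r18 := cE_two K (n-6)
  have r19 := cA_split (K+1) 3 (by omega) (n-5)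
  have r20 := cE_three (K+1) (n-5)
  have r21 := cA_one (K+1) (n-5) (by omega)
  have r22 := cA_split K 2 (by omega) (n-7)
  have r23 := cA_split (K+1) 4 (by omega) (n-6)
  have r24 := cA_one (K+1) (n-6) (by omega)
  have r25 := cA_split K 2 (by omega) (n-8)
  have r26 := cA_split K 3 (by omega) (n-6)
  have r27 := cA_split K 4 (by omega) (n-7)
  have r28 := cA_split K 3 (by omega) (n-7)
  have r29 := cA_split K 4 (by omega) (n-8)
  have r30 := cA_split K 3 (by omega) (n-8)
  have r31 := cA_split K 4 (by omega) (n-9)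
  simp only [sub_sub, add_assoc, Int.reduceAdd, Nat.reduceAdd] at *
  simp only [r1, r2, r3, r4, r5, r6, r7, r8, r9, r10, r11, r12, r13, r14, r15, r16, r17, r18, r19, r20, r21, r22, r23, r24, r25, r26, r27, r28, r29, r30, r31]
  ring

lemma step_large (K : ℕ) (h0 : Mon K) (h1 : Mon (K + 1)) (a b : ℤ) (ha : 7 ≤ a)
    (hab : a ≤ b) (h : a + b ≤ 4 * K + 13) : cA (K + 4) 1 a ≤ cA (K + 4) 1 b := by
  rw [expand K a ha, expand K b (by omega)]
  have w1 := window (cA (K+1) 1) _ (h1 1 le_rfl) 7 (b-3) (a-9) (by push_cast; omega) (by push_cast; omega)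
  have w2 := window (cA (K+1) 1) _ (h1 1 le_rfl) 5 (b-4) (a-8) (by push_cast; omega) (by push_cast; omega)
  have w3 := window (cA K 3) _ (h0 3 (by omega)) 3 (b-7) (a-9) (by push_cast; omega) (by push_cast; omega)
  simp only [sum_range_succ, sum_range_zero] at w1 w2 w3
  push_cast at w1 w2 w3
  simp only [sub_sub, add_assoc, sub_add, Int.reduceAdd, Int.reduceSub, add_zero, sub_zero, zero_add] at w1 w2 w3
  have s1 := h0 4 (by omega) (a-8) (b-8) (by omega) (by omega)
  have s2 := h0 3 (by omega) (a-8) (b-8) (by omega) (by omega)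
  have s3 := h0 4 (by omega) (a-9) (b-9) (by omega) (by omega)
  have s4 := h0 4 (by omega) (a-10) (b-10) (by omega) (by omega)
  have t1 := monE K h0 3 (a-6) (b-6) (by omega) (by omega)
  have t2 := monE K h0 4 (a-7) (b-7) (by omega) (by omega)
  have t3 := monE K h0 3 (a-7) (b-7) (by omega) (by omega)
  have t4 := monE K h0 4 (a-8) (b-8) (by omega) (by omega)
  have t5 := monE K h0 2 (a-7) (b-7) (by omega) (by omega)
  have t6 := monE K h0 3 (a-8) (b-8) (by omega) (by omega)
  have t7 := monE K h0 4 (a-9) (b-9) (by omega) (by omega)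
  have t8 := monE K h0 2 (a-8) (b-8) (by omega) (by omega)
  have t9 := monE (K+1) h1 4 (a-6) (b-6) (by omega) (by push_cast; omega)
  have u1 := h1 5 (by omega) (a-10) (b-10) (by omega) (by push_cast; omega)
  have u2 := h1 6 (by omega) (a-11) (b-11) (by omega) (by push_cast; omega)
  have u3 := h1 1 (by omega) (a-7) (b-7) (by omega) (by push_cast; omega)
  omega

lemma cA_mono (k s : ℕ) (n : ℤ) : cA k s n ≤ cA (k + 1) s n := by
  induction k generalizing s n with
  | zero =>
    rw [cA_succ]
    calc cA 0 s n = cA 0 0 (n - (0 : ℕ)) := by simp [cA]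
      _ ≤ _ := single_le_sum (f := fun x : ℕ => cA 0 x (n - x)) (fun _ _ => Nat.zero_le _)
          (mem_range.2 (by omega))
  | succ k ih =>
    rw [cA_succ, cA_succ]
    exact sum_le_sum fun x _ => ih x _

lemma cA_stable (k s : ℕ) (n : ℤ) (h : n ≤ k) : cA (k + 1) s n = cA k s n := by
  induction k generalizing s n with
  | zero =>
    rcases lt_or_eq_of_le h with h | h
    · rw [cA_neg _ _ _ (by simpa using h), cA_neg _ _ _ (by simpa using h)]
    · simp only [Nat.cast_zero] at h
      subst h
      rw [cA_succ, sum_range_succ']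
      simp [cA]
      intro i _
      omega
  | succ k ih =>
    rw [cA_succ, cA_succ k]
    apply sum_congr rfl
    intro x _
    rcases Nat.eq_zero_or_pos x with rfl | hx
    · rw [cA_zero, cA_zero]
    · apply ih
      push_cast at h
      omega

lemma cA_stable6 (k : ℕ) (hk : 6 ≤ k) (n : ℤ) (h : n ≤ 6) : cA k 1 n = cA 6 1 n := by
  induction k, hk using Nat.le_induction with
  | base => rfl
  | succ k hk ih => rw [cA_stable _ _ _ (by omega), ih]

lemma cA_shift (k : ℕ) (n : ℤ) : cA k 1 (n - 12) ≤ cA (k + 3) 1 n := by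
  have g : ∀ (k s x : ℕ) (n : ℤ), x ≤ 2 * s → cA k x (n - x) ≤ cA (k + 1) s n := by
    intro k s x n hx
    rw [cA_succ]
    exact single_le_sum (f := fun x : ℕ => cA k x (n - x)) (fun _ _ => Nat.zero_le _)
          (mem_range.2 (by omega))
  have g1 := g (k+2) 1 2 n (by omega)
  have g2 := g (k+1) 2 4 (n-2) (by omega)
  have g3 := g k 4 6 (n-2-4) (by omega)
  have g4 : cA k 1 (n-2-4-6) ≤ cA k 6 (n-2-4-6) := by
    cases k with
    | zero => simp [cA]
    | succ k => rw [cA_split k 6 (by omega)]; omega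
  have e : n - 2 - 4 - 6 = n - 12 := by ring
  push_cast at g1 g2 g3
  rw [e] at g3 g4
  exact g4.trans (g3.trans (g2.trans g1))

/-- Plain recursive sum of `f 0, …, f (N - 1)`. -/
def sumTo (f : ℕ → ℕ) (N : ℕ) : ℕ := Nat.rec 0 (fun i r => r + f i) N

/-- A version of `cA` on naturals that is fast to evaluate. -/
def cN (k : ℕ) : ℕ → ℕ → ℕ :=
  Nat.rec (fun _ n => 1 - n)
    (fun _ F s n => sumTo (fun x => F x (n - x)) (min (2 * s) n + 1)) k

lemma sumTo_eq (f : ℕ → ℕ) (N : ℕ) : sumTo f N = ∑ x ∈ range N, f x := by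
  induction N with
  | zero => rfl
  | succ N ih => rw [sum_range_succ, ← ih]; rfl

lemma cN_succ (k s n : ℕ) :
    cN (k + 1) s n = sumTo (fun x => cN k x (n - x)) (min (2 * s) n + 1) := rfl

lemma cA_eq_cN (k : ℕ) : ∀ s n : ℕ, cA k s (n : ℤ) = cN k s n := by
  induction k with
  | zero =>
    intro s n
    show (if (n : ℤ) = 0 then 1 else 0) = 1 - n
    split_ifs <;> omega
  | succ k ih =>
    intro s n
    rw [cA_succ, cN_succ, sumTo_eq]
    have hsub : range (min (2 * s) n + 1) ⊆ range (2 * s + 1) := by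
      intro x hx
      have := mem_range.1 hx
      exact mem_range.2 (by omega)
    rw [← sum_subset hsub]
    · apply sum_congr rfl
      intro x hx
      have := mem_range.1 hx
      rw [← ih, Nat.cast_sub (by omega)]
    · intro x hx hx'
      rw [mem_range] at hx hx'
      exact cA_neg _ _ _ (by omega)

lemma base5N : ∀ i < 19, 16 ≤ cN 5 1 (i + 7) := by decide +kernel

lemma table6N : ∀ i < 7, ∀ j < 7, i ≤ j → cN 6 1 i ≤ cN 6 1 j ∧ cN 6 1 i ≤ 16 := by
  decide +kernel

lemma smallN : ∀ k < 6, ∀ j < 18, ∀ i < j + 1, i + j + 3 ≤ 4 * k → cN k 1 i ≤ cN k 1 j := by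
  decide +kernel

lemma base5 (b : ℤ) (h : 7 ≤ b) (h' : b ≤ 25) : 16 ≤ cA 5 1 b := by
  have := base5N (b - 7).toNat (by omega)
  rwa [← cA_eq_cN, show (((b - 7).toNat + 7 : ℕ) : ℤ) = b by omega] at this

lemma cA_shift2 (k : ℕ) (n : ℤ) : cA (k + 1) 1 (n - 2) ≤ cA (k + 2) 1 n := by
  have h1 : cA (k + 1) 2 (n - (2 : ℕ)) ≤ cA (k + 2) 1 n := by
    rw [cA_succ (k + 1)]
    exact single_le_sum (f := fun x : ℕ => cA (k + 1) x (n - x)) (fun _ _ => Nat.zero_le _)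
          (mem_range.2 (by omega))
  rw [cA_split k 2 (by omega)] at h1
  push_cast at h1
  omega

lemma table6 (i j : ℕ) (hi : i < 7) (hj : j < 7) (h : i ≤ j) :
    cA 6 1 (i : ℤ) ≤ cA 6 1 (j : ℤ) ∧ cA 6 1 (i : ℤ) ≤ 16 := by
  simpa only [cA_eq_cN] using table6N i hi j hj h

lemma small (k i j : ℕ) (hk : k < 6) (hij : i ≤ j) (h : i + j + 3 ≤ 4 * k) :
    cA k 1 (i : ℤ) ≤ cA k 1 (j : ℤ) := by
  simpa only [cA_eq_cN] using smallN k hk j (by omega) i (by omega) h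

lemma lower (k : ℕ) (hk : 5 ≤ k) : ∀ b : ℤ, 7 ≤ b → b ≤ 4 * k + 1 → 16 ≤ cA k 1 b := by
  induction k using Nat.strong_induction_on with
  | _ k ih =>
    intro b h7 hb
    by_cases h5 : k = 5
    · subst h5
      exact base5 b h7 (by omega)
    by_cases hm : b ≤ 4 * (k - 1 : ℕ) + 1
    · have h1 := ih (k - 1) (by omega) (by omega) b h7 hm
      have h2 := cA_mono (k - 1) 1 b
      rw [show k - 1 + 1 = k by omega] at h2
      omega
    by_cases h6 : k = 6
    · subst h6
      exact (base5 (b - 2) (by omega) (by omega)).trans (cA_shift2 4 b)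
    by_cases h7 : k = 7
    · subst h7
      exact (base5 (b - 2 - 2) (by omega) (by omega)).trans
        ((cA_shift2 4 (b - 2)).trans (cA_shift2 5 b))
    have h1 := ih (k - 3) (by omega) (by omega) (b - 12) (by omega) (by omega)
    have h2 := cA_shift (k - 3) b
    rw [show k - 3 + 3 = k by omega] at h2
    omega

lemma small_a (k : ℕ) (hk : 6 ≤ k) (a b : ℤ) (h0 : 0 ≤ a) (ha : a ≤ 6) (hab : a ≤ b)
    (h : a + b ≤ 4 * k - 3) : cA k 1 a ≤ cA k 1 b := by
  rw [cA_stable6 k hk a ha]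
  have ea : ((a.toNat : ℕ) : ℤ) = a := by omega
  by_cases hb : b ≤ 6
  · rw [cA_stable6 k hk b hb]
    have := (table6 a.toNat b.toNat (by omega) (by omega) (by omega)).1
    rwa [ea, show ((b.toNat : ℕ) : ℤ) = b by omega] at this
  · have h1 := (table6 a.toNat 6 (by omega) (by omega) (by omega)).2
    rw [ea] at h1
    have := lower k (by omega) b (by omega) (by omega)
    omega

lemma mon_all (k : ℕ) : Mon k := by
  induction k using Nat.strong_induction_on with
  | _ k ih =>
    have h1 : ∀ a b : ℤ, a ≤ b → a + b ≤ 4 * k - 3 → cA k 1 a ≤ cA k 1 b := by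
      intro a b hab h
      by_cases h0 : a < 0
      · rw [cA_neg _ _ _ h0]; exact Nat.zero_le _
      by_cases hk : k < 6
      · have := small k a.toNat b.toNat hk (by omega) (by omega)
        rwa [show ((a.toNat : ℕ) : ℤ) = a by omega, show ((b.toNat : ℕ) : ℤ) = b by omega] at this
      by_cases ha : a ≤ 6
      · exact small_a k (by omega) a b (by omega) ha hab h
      · obtain ⟨K, rfl⟩ : ∃ K, k = K + 4 := ⟨k - 4, by omega⟩
        push_cast at h
        exact step_large K (ih K (by omega)) (ih (K + 1) (by omega)) a b (by omega) hab (by omega)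
    cases k with
    | zero =>
      intro s _ a b hab h
      rw [cA_neg _ _ a (by push_cast at h; omega)]
      exact Nat.zero_le _
    | succ k =>
      apply mon_succ k (ih k (by omega))
      intro a b hab h
      apply h1 a b hab
      push_cast
      omega

/-- Multisets of exponents at most `k`, with sum of powers `2 s 2^k` and card `n + 2 s`. -/
def cS : ℕ → ℕ → ℤ → Finset (Multiset ℕ)
  | 0, s, n => if n = 0 then {Multiset.replicate (2 * s) 0} else ∅
  | k + 1, s, n => (range (2 * s + 1)).biUnion fun x =>
      (cS k x (n - x)).image fun b => b + Multiset.replicate (2 * s - x) (k + 1)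

lemma mem_cS (k : ℕ) : ∀ (s : ℕ) (n : ℤ) (b : Multiset ℕ), b ∈ cS k s n ↔
    (∀ i ∈ b, i ≤ k) ∧ (Multiset.card b : ℤ) = n + 2 * s ∧
      (b.map fun i => 2 ^ i).sum = 2 * s * 2 ^ k := by
  induction k with
  | zero =>
    intro s n b
    have key : (∀ i ∈ b, i ≤ 0) → b = Multiset.replicate (Multiset.card b) 0 := by
      intro h
      exact Multiset.eq_replicate_card.2 fun i hi => by have := h i hi; omega
    constructor
    · intro h
      by_cases hn : n = 0
      · simp only [cS, hn, if_true, mem_singleton] at h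
        subst h
        refine ⟨fun i hi => ?_, ?_, ?_⟩
        · rw [Multiset.eq_of_mem_replicate hi]
        · simp [hn]
        · simp
      · simp [cS, hn] at h
    · rintro ⟨h1, h2, h3⟩
      have hb := key h1
      rw [hb] at h3
      simp at h3
      have hn : n = 0 := by omega
      simp only [cS, hn, if_true, mem_singleton]
      rw [hb, h3]
  | succ k ih =>
    intro s n b
    simp only [cS, mem_biUnion, mem_image, mem_range]
    constructor
    · rintro ⟨x, hx, b', hb', rfl⟩
      obtain ⟨h1, h2, h3⟩ := (ih _ _ _).1 hb'
      refine ⟨?_, ?_, ?_⟩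
      · intro i hi
        rcases Multiset.mem_add.1 hi with hi | hi
        · have := h1 i hi; omega
        · rw [Multiset.eq_of_mem_replicate hi]
      · rw [Multiset.card_add, Multiset.card_replicate]
        push_cast
        omega
      · rw [Multiset.map_add, Multiset.sum_add, h3, Multiset.map_replicate, Multiset.sum_replicate,
          smul_eq_mul]
        obtain ⟨y, hy⟩ : ∃ y, 2 * s = x + y := ⟨2 * s - x, by omega⟩
        rw [hy, show x + y - x = y by omega, pow_succ]
        ring
    · rintro ⟨h1, h2, h3⟩
      set c := b.count (k + 1) with hc
      set b' := b.filter (fun i => i ≠ k + 1) with hb'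
      have hb : b = b' + Multiset.replicate c (k + 1) := by
        have := Multiset.filter_add_not (fun i => i ≠ k + 1) b
        rw [← this]
        congr 1
        simp only [not_not]
        rw [Multiset.filter_eq' b (k+1)]
      have hsum : (b'.map fun i => 2 ^ i).sum + c * 2 ^ (k + 1) = 2 * s * 2 ^ (k + 1) := by
        rw [← h3]
        conv_rhs => rw [hb]
        rw [Multiset.map_add, Multiset.sum_add, Multiset.map_replicate, Multiset.sum_replicate,
          smul_eq_mul]
      have hcs : c ≤ 2 * s := by
        have hp : 0 < 2 ^ (k + 1) := by positivity
        have : c * 2 ^ (k + 1) ≤ 2 * s * 2 ^ (k + 1) := by omega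
        exact Nat.le_of_mul_le_mul_right this hp
      have hcard : Multiset.card b = Multiset.card b' + c := by
        conv_lhs => rw [hb]
        simp
      refine ⟨2 * s - c, by omega, b', (ih _ _ _).2 ⟨?_, ?_, ?_⟩, ?_⟩
      · intro i hi
        have hi' := Multiset.mem_filter.1 hi
        have := h1 i hi'.1
        have := hi'.2
        omega
      · omega
      · obtain ⟨y, hy⟩ : ∃ y, 2 * s = c + y := ⟨2 * s - c, by omega⟩
        rw [hy] at hsum ⊢
        rw [show c + y - c = y by omega]
        rw [add_mul] at hsum
        have : (b'.map fun i => 2 ^ i).sum = y * 2 ^ (k + 1) := by omega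
        rw [this, pow_succ]
        ring
      · rw [show 2 * s - (2 * s - c) = c by omega]
        exact hb.symm

lemma card_cS (k : ℕ) : ∀ (s : ℕ) (n : ℤ), (cS k s n).card = cA k s n := by
  induction k with
  | zero =>
    intro s n
    by_cases hn : n = 0 <;> simp [cS, cA, hn]
  | succ k ih =>
    intro s n
    rw [cA_succ]
    simp only [cS]
    rw [card_biUnion]
    · apply sum_congr rfl
      intro x _
      rw [card_image_of_injective, ih]
      intro b c h
      exact add_right_cancel h
    · intro x hx y hy hxy
      refine disjoint_left.2 ?_
      intro b hb hb2
      obtain ⟨u, hu, rfl⟩ := mem_image.1 hb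
      obtain ⟨v, hv, huv⟩ := mem_image.1 hb2
      have cu : u.count (k + 1) = 0 := Multiset.count_eq_zero.2 fun h => by
        have := ((mem_cS _ _ _ _).1 hu).1 _ h; omega
      have cv : v.count (k + 1) = 0 := Multiset.count_eq_zero.2 fun h => by
        have := ((mem_cS _ _ _ _).1 hv).1 _ h; omega
      have := congrArg (Multiset.count (k + 1)) huv
      simp only [Multiset.count_add, cu, cv, Multiset.count_replicate_self] at this
      have := mem_range.1 hx
      have := mem_range.1 hy
      omega

lemma set_eq (k r : ℕ) (hr : 2 ≤ r) :
    {b : Multiset ℕ | Multiset.card b = r ∧ (b.map fun i => 2 ^ i).sum = 2 ^ (k + 1)}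
      = (cS k 1 ((r : ℤ) - 2) : Set (Multiset ℕ)) := by
  ext b
  rw [Set.mem_ofPred_eq, mem_coe, mem_cS]
  have e : 2 * 1 * 2 ^ k = 2 ^ (k + 1) := by ring
  rw [e]
  constructor
  · rintro ⟨h1, h2⟩
    refine ⟨?_, by push_cast; omega, h2⟩
    intro i hi
    by_contra hlt
    obtain ⟨b', rfl⟩ := Multiset.exists_cons_of_mem hi
    rw [Multiset.map_cons, Multiset.sum_cons] at h2
    rw [Multiset.card_cons] at h1
    obtain ⟨j, hj⟩ := Multiset.card_pos_iff_exists_mem.1 (show 0 < Multiset.card b' by omega)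
    obtain ⟨b'', rfl⟩ := Multiset.exists_cons_of_mem hj
    rw [Multiset.map_cons, Multiset.sum_cons] at h2
    have h3 : 2 ^ (k + 1) ≤ 2 ^ i := Nat.pow_le_pow_right (by norm_num) (by omega)
    have h4 : 0 < 2 ^ j := by positivity
    omega
  · rintro ⟨_, h2, h3⟩
    exact ⟨by push_cast at h2; omega, h3⟩

/-- For `m ≥ 4`, the number of expansions of `2^m` of length `2m − 2` is at most the
number of expansions of `2^m` of length `2m − 1`, where an expansion of `N` of length
`r` is a multiset `b` of naturals with `card b = r` and `∑_{i ∈ b} 2^i = N`. -/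
theorem card_expansions_le (m : ℕ) (hm : 4 ≤ m) :
    {b : Multiset ℕ | Multiset.card b = 2 * m - 2 ∧ (b.map fun i => 2 ^ i).sum = 2 ^ m}.ncard ≤
      {b : Multiset ℕ | Multiset.card b = 2 * m - 1 ∧ (b.map fun i => 2 ^ i).sum = 2 ^ m}.ncard := by
  obtain ⟨k, rfl⟩ : ∃ k, m = k + 1 := ⟨m - 1, by omega⟩
  rw [set_eq k _ (by omega), set_eq k _ (by omega), Set.ncard_coe_finset, Set.ncard_coe_finset,
    card_cS, card_cS]
  exact mon_all k 1 le_rfl _ _ (by omega) (by omega)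
end

section
/- Let E : ℕ → ℕ → ℕ be the recursively defined sequence (see context). Then for every t ≥ 2, E (2^t) (2t − 2) ≥ 2^{t−2}. That is, dim Ext^{2t−2}(Δ(0), Δ(2·2^t)) is at least 2^{t−2} in characteristic 2. -/
theorem E_zero_zero : E 0 0 = 1 := by rw [E]

theorem E_zero_succ (m : ℕ) : E 0 (m + 1) = 0 := by rw [E]

theorem E_even (d m : ℕ) : E (2 * d + 2) (m + 1) = E (2 * d + 1) m := by
  have h : ¬ Odd (2 * d + 1 + 1) := by rw [Nat.not_odd_iff_even]; exact ⟨d + 1, by omega⟩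
  rw [E, if_neg h, add_zero]

theorem E_even_zero (d : ℕ) : E (2 * d + 2) 0 = 0 := by
  have h : ¬ Odd (2 * d + 1 + 1) := by rw [Nat.not_odd_iff_even]; exact ⟨d + 1, by omega⟩
  rw [E, if_neg h]

theorem E_odd (d m : ℕ) : E (2 * d + 1) (m + 1) = E (2 * d) m + E d (m + 1) := by
  have h : Odd (2 * d + 1) := ⟨d, rfl⟩
  have h2 : 2 * d / 2 = d := by omega
  rw [E, if_pos h, h2]

theorem E_odd_zero (d : ℕ) : E (2 * d + 1) 0 = E d 0 := by
  have h : Odd (2 * d + 1) := ⟨d, rfl⟩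
  have h2 : 2 * d / 2 = d := by omega
  rw [E, if_pos h, h2]

theorem E_step (d m : ℕ) : E (2 * d + 3) (m + 2) = E (2 * d + 1) m + E (d + 1) (m + 2) := by
  have h1 := E_odd (d + 1) (m + 1)
  have h2 := E_even d m
  rw [← h2]; exact h1

theorem E_odd_ge (d m : ℕ) : E d m ≤ E (2 * d + 1) m := by
  cases m with
  | zero => rw [E_odd_zero]
  | succ m => rw [E_odd]; omega

/-- The twelve lower bounds carried through the induction; here `n = 2 ^ (k + 4) - 5`, `c = 2 ^ k`. -/
def Bounds (n k c : ℕ) : Prop :=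
  (2 * c ≤ E (n + 4) (2 * k + 3) ∧ 3 * c ≤ E (n + 4) (2 * k + 4) ∧ 4 * c ≤ E (n + 4) (2 * k + 5) ∧
    3 * c ≤ E (n + 4) (2 * k + 6) ∧ 3 * c ≤ E (n + 4) (2 * k + 7)) ∧
  (c ≤ E (n + 2) (2 * k + 2) ∧ 3 * c ≤ E (n + 2) (2 * k + 3) ∧ 3 * c ≤ E (n + 2) (2 * k + 4) ∧
    3 * c ≤ E (n + 2) (2 * k + 5)) ∧
  (c ≤ E n (2 * k + 1) ∧ 2 * c ≤ E n (2 * k + 2) ∧ 2 * c ≤ E n (2 * k + 3))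

theorem bounds_step (q k c : ℕ) (h : Bounds (2 * q + 1) k c) :
    Bounds (2 * (2 * q + 1) + 5) (k + 1) (2 * c) := by
  have h9 (m : ℕ) : E (2 * (2 * q + 1) + 5 + 4) (m + 2) =
      E (2 * (2 * q + 1) + 5 + 2) m + E (2 * q + 1 + 4) (m + 2) := E_step (2 * q + 1 + 3) m
  have h7 (m : ℕ) : E (2 * (2 * q + 1) + 5 + 2) (m + 2) =
      E (2 * (2 * q + 1) + 5) m + E (2 * q + 1 + 2) (m + 1) := by
    rw [show 2 * q + 1 + 2 = 2 * (q + 1) + 1 by ring, ← E_even (q + 1) (m + 1)]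
    exact E_step (2 * q + 1 + 2) m
  have h5 (m : ℕ) : E (2 * (2 * q + 1) + 5) (m + 2) =
      E (2 * (2 * q + 1) + 3) m + E (2 * q + 1 + 2) (m + 2) := E_step (2 * q + 1 + 1) m
  have h3 (m : ℕ) : E (2 * (2 * q + 1) + 3) (m + 2) =
      E (2 * (2 * q + 1) + 1) m + E (2 * q + 1) (m + 1) := by
    rw [← E_even q (m + 1)]; exact E_step (2 * q + 1) m
  have h1 (m : ℕ) : E (2 * q + 1) m ≤ E (2 * (2 * q + 1) + 1) m := E_odd_ge _ m
  have h3' (m : ℕ) : E (2 * q + 1) m ≤ E (2 * (2 * q + 1) + 3) (m + 1) := by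
    cases m with
    | zero => rw [← E_even q 0]; exact (Nat.le_add_left _ _).trans_eq (E_odd (2 * q + 1 + 1) 0).symm
    | succ m => rw [h3]; omega
  simp only [Bounds, show 2 * (k + 1) = 2 * k + 2 by ring, Nat.add_assoc] at *
  simp only [Nat.reduceAdd] at *
  obtain ⟨⟨a1, a2, a3, a4, a5⟩, ⟨b1, b2, b3, b4⟩, c1, c2, c3⟩ := h
  have h9_3 := h9 (2 * k + 3)
  have h9_4 := h9 (2 * k + 4)
  have h9_5 := h9 (2 * k + 5)
  have h9_6 := h9 (2 * k + 6)
  have h9_7 := h9 (2 * k + 7)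
  have h7_1 := h7 (2 * k + 1)
  have h7_2 := h7 (2 * k + 2)
  have h7_3 := h7 (2 * k + 3)
  have h7_4 := h7 (2 * k + 4)
  have h7_5 := h7 (2 * k + 5)
  have h5_0 := h5 (2 * k + 0)
  have h5_1 := h5 (2 * k + 1)
  have h5_2 := h5 (2 * k + 2)
  have h5_3 := h5 (2 * k + 3)
  have h3_0 := h3 (2 * k + 0)
  have h3_1 := h3 (2 * k + 1)
  have h3_2 := h3 (2 * k + 2)
  have h1_1 := h1 (2 * k + 1)
  have h1_2 := h1 (2 * k + 2)
  have h1_3 := h1 (2 * k + 3)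
  have h3'_1 := h3' (2 * k)
  have h3'_2 := h3' (2 * k + 1)
  simp only [Nat.add_assoc, Nat.reduceAdd, Nat.add_zero] at *
  clear h9 h7 h5 h3 h1 h3'
  refine ⟨⟨?_, ?_, ?_, ?_, ?_⟩, ⟨?_, ?_, ?_, ?_⟩, ?_, ?_, ?_⟩ <;> omega

theorem bounds_all (k : ℕ) : ∃ q, 2 * q + 1 + 5 = 2 ^ (k + 4) ∧ Bounds (2 * q + 1) k (2 ^ k) := by
  induction k with
  | zero =>
    refine ⟨5, by norm_num, ?_⟩
    norm_num [Bounds, E, Nat.odd_iff]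
  | succ k ih =>
    obtain ⟨q, hq, hb⟩ := ih
    refine ⟨2 * q + 3, ?_, ?_⟩
    · rw [show k + 1 + 4 = k + 4 + 1 by ring, pow_succ, ← hq]; ring
    · have := bounds_step q k _ hb
      rw [pow_succ, mul_comm (2 ^ k) 2]
      convert this using 1
      ring

/-- For `t ≥ 2`, `dim Ext^{2t−2}(Δ(0), Δ(2·2^t)) = E (2^t) (2t − 2)` is at
least `2^{t−2}`. -/
theorem E_two_pow_ge (t : ℕ) (ht : 2 ≤ t) : 2 ^ (t - 2) ≤ E (2 ^ t) (2 * t - 2) := by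
  obtain rfl | rfl | ⟨k, rfl⟩ : t = 2 ∨ t = 3 ∨ ∃ k, t = k + 4 := by
    by_cases h2 : t = 2
    · exact Or.inl h2
    · by_cases h3 : t = 3
      · exact Or.inr (Or.inl h3)
      · exact Or.inr (Or.inr ⟨t - 4, by omega⟩)
  · norm_num [E, Nat.odd_iff]
  · norm_num [E, Nat.odd_iff]
  · obtain ⟨q, hq, hb⟩ := bounds_all k
    have h := hb.1.2.2.1
    have e := E_even (q + 2) (2 * k + 5)
    rw [← hq, show 2 * (k + 4) - 2 = 2 * k + 5 + 1 by omega, show k + 4 - 2 = k + 2 by omega, pow_add]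
    rw [show 2 * q + 1 + 5 = 2 * (q + 2) + 2 by ring, e]
    rw [show 2 * q + 1 + 4 = 2 * (q + 2) + 1 by ring] at h
    omega
end

section
/- For every t ≥ 2: the number of multisets b of natural numbers with card b = 2t − 2 and ∑_{i ∈ b} 2^i = 2^t is at least 2^{t−2}, and the number of multisets b of natural numbers with card b = 2t − 1 and ∑_{i ∈ b} 2^i = 2^t is also at least 2^{t−2}. -/
/-- `cnt t m n`: sequences of numbers of internal nodes per level, starting with `m`,
at most `t` levels, total `n`, each entry at most twice the previous one. -/
def cnt : ℕ → ℕ → ℕ → ℕ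
  | 0, m, n => if m = 0 ∧ n = 0 then 1 else 0
  | t + 1, m, n => if n < m then 0 else ∑ j ∈ Finset.range (2 * m + 1), cnt t j (n - m)

theorem cnt_succ (t m n : ℕ) :
    cnt (t + 1) m (n + m) = ∑ j ∈ Finset.range (2 * m + 1), cnt t j n := by
  simp [cnt]

theorem exists_family (t : ℕ) : ∀ m n : ℕ, ∃ s : Finset (Multiset ℕ), s.card = cnt t m n ∧
    ∀ b ∈ s, (∀ i ∈ b, i < t) ∧ Multiset.card b = m + n ∧
      (b.map fun i => 2 ^ i).sum = m * 2 ^ t := by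
  induction t with
  | zero =>
    intro m n
    by_cases h : m = 0 ∧ n = 0
    · refine ⟨{0}, by simp [cnt, h], ?_⟩
      simp [h.1, h.2]
    · exact ⟨∅, by simp [cnt, h], by simp⟩
  | succ t ih =>
    intro m n
    by_cases h : n < m
    · exact ⟨∅, by simp [cnt, h], by simp⟩
    obtain ⟨n, rfl⟩ : ∃ k, n = k + m := ⟨n - m, by omega⟩
    choose s hs1 hs2 using ih
    refine ⟨(Finset.range (2 * m + 1)).biUnion fun j =>
      (s j n).image fun b => Multiset.replicate (2 * m - j) t + b, ?_, ?_⟩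
    · rw [cnt_succ, Finset.card_biUnion]
      · refine Finset.sum_congr rfl fun j _ => ?_
        rw [Finset.card_image_of_injective _ (add_right_injective _), hs1]
      · intro j hj k hk hjk
        rw [Function.onFun, Finset.disjoint_left]
        intro c hc hd
        rw [Finset.mem_image] at hc hd
        obtain ⟨b, hb, rfl⟩ := hc
        obtain ⟨d, hd, he⟩ := hd
        have h1 : b.count t = 0 := Multiset.count_eq_zero.2 fun h =>
          lt_irrefl _ ((hs2 _ _ b hb).1 t h)
        have h2 : d.count t = 0 := Multiset.count_eq_zero.2 fun h =>
          lt_irrefl _ ((hs2 _ _ d hd).1 t h)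
        have h3 := congrArg (Multiset.count t) he
        simp only [Multiset.count_add, Multiset.count_replicate_self, h1, h2] at h3
        simp only [Finset.coe_range, Set.mem_Iio, Finset.mem_range] at hj hk
        omega
    · intro c hc
      simp only [Finset.mem_biUnion, Finset.mem_image, Finset.mem_range] at hc
      obtain ⟨j, hj, b, hb, rfl⟩ := hc
      obtain ⟨h1, h2, h3⟩ := hs2 _ _ b hb
      refine ⟨?_, ?_, ?_⟩
      · intro i hi
        rcases Multiset.mem_add.1 hi with hi | hi
        · rw [Multiset.eq_of_mem_replicate hi]; omega
        · have := h1 i hi; omega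
      · rw [Multiset.card_add, Multiset.card_replicate, h2]; omega
      · rw [Multiset.map_add, Multiset.sum_add, h3, Multiset.map_replicate,
          Multiset.sum_replicate, smul_eq_mul, ← add_mul, pow_succ,
          show 2 * m - j + j = 2 * m by omega]
        ring

theorem expansions_finite (t r : ℕ) :
    {b : Multiset ℕ | Multiset.card b = r ∧ (b.map fun i => 2 ^ i).sum = 2 ^ t}.Finite := by
  refine (Finset.finite_toSet (Finset.Icc 0 (r • (Multiset.range (2 ^ t))))).subset ?_
  rintro b ⟨h1, h2⟩
  simp only [Finset.coe_Icc, Set.mem_Icc, zero_le, true_and]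
  rw [Multiset.le_iff_count]
  intro i
  by_cases hi : i ∈ b
  · have h3 : 2 ^ i ≤ 2 ^ t := by
      rw [← h2]
      exact Multiset.single_le_sum (by simp) _ (Multiset.mem_map_of_mem _ hi)
    have h4 : i < 2 ^ t := lt_of_lt_of_le Nat.lt_two_pow_self h3
    rw [Multiset.count_nsmul,
      Multiset.count_eq_one_of_mem (Multiset.nodup_range _) (Multiset.mem_range.2 h4), mul_one, ← h1]
    exact Multiset.count_le_card _ _
  · rw [Multiset.count_eq_zero.2 hi]; exact Nat.zero_le _

theorem cnt_le (t n : ℕ) : cnt t 1 n ≤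
    {b : Multiset ℕ | Multiset.card b = 1 + n ∧ (b.map fun i => 2 ^ i).sum = 2 ^ t}.ncard := by
  obtain ⟨s, h1, h2⟩ := exists_family t 1 n
  rw [← h1, ← Set.ncard_coe_finset]
  refine Set.ncard_le_ncard ?_ (expansions_finite t (1 + n))
  intro b hb
  have := h2 b hb
  exact ⟨this.2.1, by simpa using this.2.2⟩

theorem cnt_bounds (u : ℕ) :
    2 * 2 ^ u ≤ cnt (u + 3) 1 (2 * u + 3) ∧ 2 * 2 ^ u ≤ cnt (u + 3) 1 (2 * u + 4) ∧
    2 ^ u ≤ cnt (u + 3) 1 (2 * u + 5) ∧ 2 ^ u ≤ cnt (u + 3) 2 (2 * u + 3) ∧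
    2 * 2 ^ u ≤ cnt (u + 3) 2 (2 * u + 4) ∧ 3 * 2 ^ u ≤ cnt (u + 3) 2 (2 * u + 5) ∧
    3 * 2 ^ u ≤ cnt (u + 3) 2 (2 * u + 6) ∧ 2 ^ u ≤ cnt (u + 3) 3 (2 * u + 4) ∧
    2 * 2 ^ u ≤ cnt (u + 3) 3 (2 * u + 5) ∧ 3 * 2 ^ u ≤ cnt (u + 3) 3 (2 * u + 6) := by
  induction u with
  | zero => simp [cnt, Finset.sum_range_succ]
  | succ u ih =>
    have e1 : ∀ n, cnt (u + 1 + 3) 1 (n + 1) = _ := fun n => cnt_succ (u + 3) 1 n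
    have e2 : ∀ n, cnt (u + 1 + 3) 2 (n + 2) = _ := fun n => cnt_succ (u + 3) 2 n
    have e3 : ∀ n, cnt (u + 1 + 3) 3 (n + 3) = _ := fun n => cnt_succ (u + 3) 3 n
    simp only [Finset.sum_range_succ, Finset.sum_range_zero, mul_one, Nat.reduceMul,
      Nat.reduceAdd] at e1 e2 e3
    have a1 := e1 (2 * u + 4)
    have a2 := e1 (2 * u + 5)
    have a3 := e1 (2 * u + 6)
    have b1 := e2 (2 * u + 3)
    have b2 := e2 (2 * u + 4)
    have b3 := e2 (2 * u + 5)
    have b4 := e2 (2 * u + 6)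
    have c1 := e3 (2 * u + 3)
    have c2 := e3 (2 * u + 4)
    have c3 := e3 (2 * u + 5)
    clear e1 e2 e3
    simp only [Nat.add_assoc, Nat.reduceAdd, Finset.sum_range_succ, Finset.sum_range_zero] at a1 a2 a3 b1 b2 b3 b4 c1 c2 c3 ih
    simp only [Nat.mul_add, Nat.add_assoc, Nat.reduceAdd, Nat.reduceMul, pow_succ]
    omega

/-- The inductive statement `(P_t)`: for `t ≥ 2`, the numbers of expansions of `2^t`
of lengths `2t − 2` and `2t − 1` (multisets `b` of naturals with the given cardinality
and `∑_{i ∈ b} 2^i = 2^t`) are each at least `2^{t−2}`. -/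
theorem expansions_card_ge (t : ℕ) (ht : 2 ≤ t) :
    2 ^ (t - 2) ≤
        {b : Multiset ℕ | Multiset.card b = 2 * t - 2 ∧ (b.map fun i => 2 ^ i).sum = 2 ^ t}.ncard ∧
      2 ^ (t - 2) ≤
        {b : Multiset ℕ | Multiset.card b = 2 * t - 1 ∧ (b.map fun i => 2 ^ i).sum = 2 ^ t}.ncard := by
  obtain rfl | ⟨u, rfl⟩ : t = 2 ∨ ∃ u, t = u + 3 := by
    rcases Nat.lt_or_ge t 3 with h | h
    · left; omega
    · right; exact ⟨t - 3, by omega⟩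
  · have h1 := cnt_le 2 1
    have h2 := cnt_le 2 2
    simp only [show cnt 2 1 1 = 1 by simp [cnt, Finset.sum_range_succ],
      show cnt 2 1 2 = 1 by simp [cnt, Finset.sum_range_succ]] at h1 h2
    exact ⟨h1, h2⟩
  · obtain ⟨h1, h2, -⟩ := cnt_bounds u
    have h3 := cnt_le (u + 3) (2 * u + 3)
    have h4 := cnt_le (u + 3) (2 * u + 4)
    rw [show 2 * (u + 3) - 2 = 1 + (2 * u + 3) by omega,
      show 2 * (u + 3) - 1 = 1 + (2 * u + 4) by omega,
      show u + 3 - 2 = u + 1 by omega, pow_succ, mul_comm]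
    exact ⟨h1.trans h3, h2.trans h4⟩
end

section
/- Let E : ℕ → ℕ → ℕ be the recursively defined sequence (see context). There exist real numbers c > 1 and C > 0 such that for every n ∈ ℕ there exists d ∈ ℕ with (E d n : ℝ) ≥ C · c^n. That is, in characteristic 2 the maximum over d of dim Ext^n(k, Δ(2d)) grows at least exponentially in n. -/
lemma E_succ_succ (d m : ℕ) :
    E (d + 1) (m + 1) = E d m + if Odd (d + 1) then E (d / 2) (m + 1) else 0 := by
  rw [E]

lemma E_diag (n : ℕ) : 1 ≤ E n n := by
  induction n with
  | zero => simp [E]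
  | succ n ih => rw [E_succ_succ]; omega

lemma sum_double (N m : ℕ) :
    (∑ d ∈ Finset.range (2 * N + 1), E d m) + ∑ e ∈ Finset.range (N + 1), E e (m + 1)
      ≤ ∑ d ∈ Finset.range (2 * (N + 1)), E d (m + 1) := by
  induction N with
  | zero =>
    simp [Finset.sum_range_succ, E]
  | succ N ih =>
    rw [show 2 * (N + 1 + 1) = 2 * (N + 1) + 1 + 1 by ring,
      Finset.sum_range_succ _ (2 * (N + 1) + 1), Finset.sum_range_succ _ (2 * (N + 1)),
      Finset.sum_range_succ _ (2 * (N + 1)), Finset.sum_range_succ _ (N + 1)]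
    have h0 : ∑ d ∈ Finset.range (2 * (N + 1)), E d m
        = ∑ d ∈ Finset.range (2 * N + 1), E d m + E (2 * N + 1) m :=
      Finset.sum_range_succ _ _
    have h3 : 2 * N + 1 + 1 = 2 * (N + 1) := by ring
    have h1 : E (2 * N + 1 + 1 + 1) (m + 1) = E (2 * N + 1 + 1) m + E (N + 1) (m + 1) := by
      rw [E_succ_succ, if_pos ⟨N + 1, by ring⟩]
      congr 2
      omega
    have h2 : E (2 * (N + 1)) (m + 1) ≥ E (2 * N + 1) m := by
      rw [show 2 * (N + 1) = 2 * N + 1 + 1 by ring, E_succ_succ]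
      omega
    rw [h3] at h1
    omega

lemma choose_le_sum (s : ℕ) : ∀ k n : ℕ, k + n = s →
    (n + k).choose k ≤ ∑ d ∈ Finset.range ((n + 1) * 2 ^ k), E d n := by
  induction s with
  | zero =>
    intro k n h
    obtain ⟨rfl, rfl⟩ : k = 0 ∧ n = 0 := by omega
    simp [E]
  | succ s ih =>
    intro k n h
    rcases k with _ | k
    · simp only [Nat.choose_zero_right]
      refine (E_diag n).trans ?_
      exact Finset.single_le_sum (f := fun d => E d n) (fun _ _ => Nat.zero_le _) (by simp)
    rcases n with _ | n
    · simp only [zero_add, Nat.choose_self]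
      refine (E_diag 0).trans ?_
      exact Finset.single_le_sum (f := fun d => E d 0) (fun _ _ => Nat.zero_le _) (by simp)
    have a := ih k (n + 1) (by omega)
    have b := ih (k + 1) n (by omega)
    have hp : 1 ≤ 2 ^ k := Nat.one_le_two_pow
    obtain ⟨N, hN⟩ : ∃ N, (n + 1 + 1) * 2 ^ k = N + 1 :=
      ⟨(n + 1 + 1) * 2 ^ k - 1, by have : 0 < (n + 1 + 1) * 2 ^ k := by positivity
                                   omega⟩
    have hc := sum_double N n
    have e : (n + 1 + 1) * 2 ^ (k + 1) = 2 * (N + 1) := by rw [← hN]; ring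
    have hle : (n + 1) * 2 ^ (k + 1) ≤ 2 * N + 1 := by
      have : (n + 1 + 1) * 2 ^ (k + 1) = (n + 1) * 2 ^ (k + 1) + 2 * 2 ^ k := by ring
      omega
    have hs : ∑ d ∈ Finset.range ((n + 1) * 2 ^ (k + 1)), E d n
        ≤ ∑ d ∈ Finset.range (2 * N + 1), E d n :=
      Finset.sum_le_sum_of_subset (Finset.range_mono hle)
    rw [hN] at a
    rw [e, show n + 1 + (k + 1) = (n + 1 + k) + 1 by ring, Nat.choose_succ_succ']
    rw [show n + (k + 1) = n + 1 + k by ring] at b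
    omega

lemma exists_big (n : ℕ) : ∃ d, 2 ^ n ≤ (2 * n + 1) * (n + 1) * E d n := by
  by_contra! hcon
  have h1 := choose_le_sum (n + n) n n rfl
  have h2 := Nat.four_pow_le_two_mul_add_one_mul_central_binom n
  have h3 : ∑ d ∈ Finset.range ((n + 1) * 2 ^ n), (2 * n + 1) * (n + 1) * E d n
      < ∑ d ∈ Finset.range ((n + 1) * 2 ^ n), 2 ^ n :=
    Finset.sum_lt_sum_of_nonempty (by simp) (fun d _ => hcon d)
  rw [← Finset.mul_sum, Finset.sum_const, Finset.card_range, smul_eq_mul] at h3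
  have h4 : (4 : ℕ) ^ n = 2 ^ n * 2 ^ n := by rw [← mul_pow]; norm_num
  rw [← two_mul] at h1
  nlinarith [Nat.mul_le_mul_left ((2 * n + 1) * (n + 1)) h1, Nat.mul_le_mul_left (n + 1) h2]

/-- Exponential growth for `p = 2`: there are `c > 1` and `C > 0` such that for every
`n` there is `d` with `dim Ext^n(k, Δ(2d)) = E d n ≥ C·c^n`. -/
theorem exponential_growth_p_two :
    ∃ c C : ℝ, 1 < c ∧ 0 < C ∧ ∀ n : ℕ, ∃ d : ℕ, C * c ^ n ≤ (E d n : ℝ) := by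
  refine ⟨32 / 25, 1 / 32, by norm_num, by norm_num, fun n => ?_⟩
  obtain ⟨d, hd⟩ := exists_big n
  refine ⟨d, ?_⟩
  have hd' : (2 : ℝ) ^ n ≤ (2 * n + 1) * (n + 1) * E d n := by exact_mod_cast hd
  have hb : 1 + (n : ℝ) * (1 / 4) ≤ (1 + 1 / 4) ^ n :=
    one_add_mul_le_pow (by norm_num) n
  have hn : (0 : ℝ) ≤ n := Nat.cast_nonneg n
  have hb1 : ((n : ℝ) + 1) / 4 ≤ (5 / 4) ^ n := by
    norm_num at hb
    linarith
  have hb2 : ((n : ℝ) + 1) ^ 2 / 16 ≤ (25 / 16) ^ n := by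
    have : (25 / 16 : ℝ) ^ n = ((5 / 4) ^ n) ^ 2 := by
      rw [← pow_mul, mul_comm, pow_mul]; norm_num
    rw [this]
    have := pow_le_pow_left₀ (by positivity) hb1 2
    nlinarith
  have h2 : (2 : ℝ) ^ n = (32 / 25) ^ n * (25 / 16) ^ n := by
    rw [← mul_pow]; norm_num
  have hc : (0 : ℝ) < (32 / 25) ^ n := by positivity
  have hE : (0 : ℝ) ≤ E d n := Nat.cast_nonneg _
  have key : ((n : ℝ) + 1) ^ 2 * (1 / 32 * (32 / 25) ^ n) ≤ ((n : ℝ) + 1) ^ 2 * E d n := by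
    have h5 := mul_le_mul_of_nonneg_left hb2 hc.le
    have h6 : (2 * (n : ℝ) + 1) * (n + 1) * E d n ≤ 2 * (n + 1) ^ 2 * E d n :=
      mul_le_mul_of_nonneg_right (by nlinarith) hE
    nlinarith
  exact le_of_mul_le_mul_left key (by positivity)
end

section
/- Let p ≥ 2 be a prime and l a natural number. Then there exists B ∈ ℕ such that for every N ∈ ℕ, the number of tuples (m₁, …, m_l) ∈ ℕ^l with ∑_{j=1}^{l} p^{m_j} = N is at most B. That is, the cardinality of 𝒩_d = {(m₁,…,m_l) : m_j ≥ 0, ∑_j p^{m_j} = d + 1} is bounded independently of d. -/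
theorem tuples_cover (p : ℕ) (hp : p.Prime) (l : ℕ) :
    ∃ B : ℕ, ∀ N : ℕ, ∃ s : Finset (Fin l → ℕ), s.card ≤ B ∧
      ∀ f : Fin l → ℕ, ∑ j, p ^ f j = N → f ∈ s := by
  classical
  induction l with
  | zero => exact ⟨1, fun N => ⟨{Fin.elim0}, by simp, fun f _ => by
      simp only [Finset.mem_singleton]; exact Subsingleton.elim _ _⟩⟩
  | succ l ih =>
    obtain ⟨B, hB⟩ := ih
    choose s hs hmem using hB
    refine ⟨(l + 1) * ((l + 2) * B), fun N => ⟨(Finset.univ : Finset (Fin (l + 1))).biUnion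
      fun j => (Finset.Icc (Nat.log p N - (l + 1)) (Nat.log p N)).biUnion
        fun m => (s (N - p ^ m)).image (fun g => Fin.insertNth (α := fun _ => ℕ) j m g), ?_, ?_⟩⟩
    · refine (Finset.card_biUnion_le_card_mul _ _ ((l + 2) * B) ?_).trans (by simp)
      intro j _
      refine (Finset.card_biUnion_le_card_mul _ _ B ?_).trans ?_
      · intro m _
        exact Finset.card_image_le.trans (hs _)
      · apply Nat.mul_le_mul_right
        rw [Nat.card_Icc]
        omega
    · intro f hf
      obtain ⟨j, hj⟩ := Finite.exists_max f
      have hsum := hf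
      rw [Fin.sum_univ_succAbove _ j] at hsum
      have h1 : p ^ f j ≤ N := by omega
      have hN : N ≠ 0 := by
        have := pow_pos hp.pos (f j)
        omega
      have h2 : N ≤ (l + 1) * p ^ f j := by
        rw [← hf]
        refine (Finset.sum_le_card_nsmul _ _ (p ^ f j) ?_).trans (by simp)
        intro i _
        exact Nat.pow_le_pow_right hp.pos (hj i)
      have h3 : N < p ^ (l + 1 + f j) := by
        rw [pow_add]
        exact h2.trans_lt (Nat.mul_lt_mul_of_pos_right (Nat.lt_pow_self hp.one_lt)
          (pow_pos hp.pos _))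
      have h4 := Nat.log_lt_of_lt_pow hN h3
      have h5 := Nat.le_log_of_pow_le hp.one_lt h1
      simp only [Finset.mem_biUnion, Finset.mem_univ, true_and, Finset.mem_image, Finset.mem_Icc]
      refine ⟨j, f j, ⟨by omega, h5⟩, fun i => f (j.succAbove i), hmem _ _ (by omega), ?_⟩
      exact Fin.insertNth_self_removeNth j f

/-- For a fixed prime `p` and fixed length `l`, the number of (ordered) tuples
`(m₁, …, m_l) ∈ ℕ^l` with `∑_j p^{m_j} = N` is bounded independently of `N`. -/
theorem card_tuples_bounded (p : ℕ) (hp : p.Prime) (l : ℕ) :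
    ∃ B : ℕ, ∀ N : ℕ, Nat.card {f : Fin l → ℕ // ∑ j, p ^ f j = N} ≤ B := by
  obtain ⟨B, hB⟩ := tuples_cover p hp l
  refine ⟨B, fun N => ?_⟩
  obtain ⟨s, hs, hmem⟩ := hB N
  refine le_trans ?_ hs
  have h : Nat.card (s : Set (Fin l → ℕ)) = s.card := by simp
  rw [← h]
  exact Nat.card_mono s.finite_toSet (fun f hf => hmem f hf)
end

section
/- Let p be a prime and r a natural number. Let a : Fin r → ℕ satisfy 0 < a i and p ∤ a i for every i. Suppose s, t : Fin r → ℕ are strictly increasing (s i < s j and t i < t j whenever i < j) and ∑_i a i · p^{s i} = ∑_i a i · p^{t i}. Then s = t. -/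
/-- The smaller leading exponent cannot be strictly smaller. -/
theorem lead_exponent_le (p : ℕ) (hp : p.Prime) (n : ℕ) (a : Fin (n + 1) → ℕ)
    (ha' : ∀ i, ¬ p ∣ a i) (s t : Fin (n + 1) → ℕ)
    (hs : StrictMono s) (ht : StrictMono t)
    (h : ∑ i, a i * p ^ s i = ∑ i, a i * p ^ t i) : t 0 ≤ s 0 := by
  by_contra hlt
  have hlt : s 0 < t 0 := not_le.mp hlt
  have h1 : p ^ (s 0 + 1) ∣ ∑ i, a i * p ^ t i := by
    apply Finset.dvd_sum
    intro i _
    have h0 : t 0 ≤ t i := ht.monotone (Fin.zero_le i)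
    exact Dvd.dvd.mul_left (pow_dvd_pow p (by omega)) _
  rw [← h, Fin.sum_univ_succ] at h1
  have h2 : p ^ (s 0 + 1) ∣ ∑ i : Fin n, a i.succ * p ^ s i.succ := by
    apply Finset.dvd_sum
    intro i _
    have h0 : s 0 < s i.succ := hs (Fin.succ_pos i)
    exact Dvd.dvd.mul_left (pow_dvd_pow p (by omega)) _
  have h3 := (Nat.dvd_add_left h2).mp h1
  rw [pow_succ, mul_comm (a 0)] at h3
  exact ha' 0 (Nat.dvd_of_mul_dvd_mul_left (pow_pos hp.pos _) h3)

/-- Uniqueness of the representation `∑ aᵢ p^{sᵢ}` with all `aᵢ` positive and prime to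
`p` and strictly increasing exponents: if two such representations with the same
coefficients are equal, then the exponent sequences agree. -/
theorem exponents_unique (p : ℕ) (hp : p.Prime) (r : ℕ) (a : Fin r → ℕ)
    (ha : ∀ i, 0 < a i) (ha' : ∀ i, ¬ p ∣ a i) (s t : Fin r → ℕ)
    (hs : StrictMono s) (ht : StrictMono t)
    (h : ∑ i, a i * p ^ s i = ∑ i, a i * p ^ t i) : s = t := by
  induction r with
  | zero => exact Subsingleton.elim _ _
  | succ n ih =>
    have h0 : s 0 = t 0 := le_antisymm
      (lead_exponent_le p hp n a ha' t s ht hs h.symm)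
      (lead_exponent_le p hp n a ha' s t hs ht h)
    rw [Fin.sum_univ_succ, Fin.sum_univ_succ, h0] at h
    have h1 := ih (fun i => a i.succ) (fun i => ha _) (fun i => ha' _)
      (fun i => s i.succ) (fun i => t i.succ)
      (fun i j hij => hs (Fin.succ_lt_succ_iff.mpr hij))
      (fun i j hij => ht (Fin.succ_lt_succ_iff.mpr hij)) (Nat.add_left_cancel h)
    funext i
    refine Fin.cases h0 (fun j => congrFun h1 j) i
end

section
/- Let E : ℕ → ℕ → ℕ be the recursively defined sequence (see context). Then for every fixed n ∈ ℕ there exists B ∈ ℕ such that E d n ≤ B for all d ∈ ℕ. That is, in characteristic 2 and for fixed cohomological degree n, the dimensions dim Ext^n(k, Δ(2d)) are bounded independently of d. -/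
/-- Binary digit sum. -/
def popc : ℕ → ℕ
  | 0 => 0
  | n + 1 => (n + 1) % 2 + popc ((n + 1) / 2)
termination_by n => n
decreasing_by omega

lemma popc_eq (n : ℕ) : popc n = n % 2 + popc (n / 2) := by
  cases n with
  | zero => simp [popc]
  | succ n => rw [popc]

lemma popc_succ_le (n : ℕ) : popc (n + 1) ≤ popc n + 1 := by
  induction n using Nat.strong_induction_on with
  | _ n ih =>
    rw [popc_eq (n + 1), popc_eq n]
    rcases Nat.even_or_odd' n with ⟨c, rfl | rfl⟩
    · have h1 : (2 * c + 1) / 2 = c := by omega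
      have h2 : (2 * c) / 2 = c := by omega
      rw [h1, h2]; omega
    · have h1 : (2 * c + 1 + 1) / 2 = c + 1 := by omega
      have h2 : (2 * c + 1) / 2 = c := by omega
      have := ih c (by omega)
      rw [h1, h2]; omega

lemma le_popc (k : ℕ) : ∀ n, 2 ^ k ∣ n + 1 → k ≤ popc n := by
  induction k with
  | zero => intro n _; omega
  | succ k ih =>
    rintro n ⟨q, hq⟩
    have h : n + 1 = 2 * (2 ^ k * q) := by rw [hq]; ring
    have := ih (n / 2) ⟨q, by omega⟩
    rw [popc_eq]; omega

lemma E_zero_of_popc (d : ℕ) : ∀ m, m + 1 < popc (d + 1) → E d m = 0 := by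
  induction d using Nat.strong_induction_on with
  | _ d ih =>
    intro m hm
    have key : ∀ e, d = e + 1 → (if Odd (e + 1) then E (e / 2) m else 0) = 0 := by
      rintro e rfl
      split_ifs with ho
      · apply ih _ (by omega)
        rw [popc_eq] at hm
        obtain ⟨c, hc⟩ := ho
        have h1 : (e + 1 + 1) / 2 = e / 2 + 1 := by omega
        rw [h1] at hm; omega
      · rfl
    cases d with
    | zero => simp [popc] at hm
    | succ e =>
      cases m with
      | zero => rw [E]; exact key e rfl
      | succ m =>
        rw [E, key e rfl, ih e (by omega) m]
        have := popc_succ_le (e + 1)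
        omega

lemma E_le_one (d : ℕ) : E d 0 ≤ 1 := by
  induction d using Nat.strong_induction_on with
  | _ d ih =>
    cases d with
    | zero => simp [E]
    | succ e =>
      rw [E]
      split_ifs
      · exact ih _ (by omega)
      · omega

lemma E_step_s18 (n B : ℕ) (hB : ∀ d, E d n ≤ B) (k : ℕ) :
    ∀ d, ¬ 2 ^ k ∣ d + 1 → E d (n + 1) ≤ k * B := by
  induction k with
  | zero => intro d h; simp at h
  | succ k ih =>
    intro d h
    cases d with
    | zero => simp [E]
    | succ e =>
      rw [E, add_mul, one_mul]
      have := hB e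
      split_ifs with ho
      · have h2 := ih (e / 2) (by
          rintro ⟨q, hq⟩
          apply h
          obtain ⟨c, hc⟩ := ho
          refine ⟨q, ?_⟩
          have : 2 ^ (k + 1) * q = 2 * (2 ^ k * q) := by ring
          omega)
        omega
      · omega

/-- For `p = 2` and fixed cohomological degree `n`, the dimensions
`dim Ext^n(k, Δ(2d)) = E d n` are bounded independently of `d`. -/
theorem E_bounded_in_d (n : ℕ) : ∃ B : ℕ, ∀ d : ℕ, E d n ≤ B := by
  induction n with
  | zero => exact ⟨1, E_le_one⟩
  | succ n ihn =>
    obtain ⟨B, hB⟩ := ihn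
    refine ⟨(n + 2) * B, fun d => ?_⟩
    induction d using Nat.strong_induction_on with
    | _ d ih =>
      by_cases h : 2 ^ (n + 2) ∣ d + 1
      · cases d with
        | zero => simp [E]
        | succ e =>
          have := le_popc _ _ h
          rw [E, E_zero_of_popc e n (by omega), zero_add]
          split_ifs
          · exact ih _ (by omega)
          · exact Nat.zero_le _
      · exact E_step_s18 n B hB _ d h
end
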